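/- arXiv:1010.5341 — 3 statements merged into one kernel-verified Lean document; each statement's English description precedes it below -/
import Mathlib

section
/- Let n and r be coprime positive integers with n > r, and let a_1, …, a_{r-1}, a_{r+1}, …, a_{n-1} be fixed integers. Then there are at most n² + n integers a_r such that the polynomial X^n + a_1X^{n-1} + ⋯ + a_{n-1}X + t, regarded as a polynomial in X over the rational function field ℚ(t) with constant coefficient the indeterminate t, does NOT have Galois group isomorphic to the full symmetric group S_n over ℚ(t). In other words, for all but at most n² + n integers a_r, the Galois group of the splitting field of this polynomial over ℚ(t) is isomorphic to S_n. -/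
open Polynomial

/-- All nonzero critical points are simple with a critical value not shared with any other
critical point. -/
def StarCond (g : ℂ[X]) : Prop :=
  ∀ c : ℂ, c ≠ 0 → g.derivative.eval c = 0 → g.derivative.derivative.eval c ≠ 0 ∧
    ∀ d : ℂ, d ≠ c → g.derivative.eval d = 0 → g.eval d ≠ g.eval c

theorem indecomposable_of_star {g u w : ℂ[X]} {s : ℕ} (hg : StarCond g)
    (hco : Nat.Coprime g.natDegree s) (hs : g.coeff s ≠ 0) (h : g = u.comp w)
    (hw : 2 ≤ w.natDegree) (hu : 2 ≤ u.natDegree) : False := by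
  have hdu : u.derivative.degree ≠ 0 := by
    intro h0
    have h1 : u.derivative.natDegree = 0 := natDegree_eq_of_degree_eq_some h0
    rw [natDegree_derivative] at h1
    omega
  obtain ⟨β, hβ⟩ := IsAlgClosed.exists_root u.derivative hdu
  rw [IsRoot.def] at hβ
  have hwd : (w - C β).natDegree = w.natDegree := natDegree_sub_C
  have hw0 : w - C β ≠ 0 := by
    intro h0; rw [h0, natDegree_zero] at hwd; omega
  have hcrit : ∀ c, w.eval c = β → g.derivative.eval c = 0 := by
    intro c hc
    rw [h, derivative_comp, eval_mul, eval_comp, hc, hβ, mul_zero]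
  have hval : ∀ c, w.eval c = β → g.eval c = u.eval β := by
    intro c hc
    rw [h, eval_comp, hc]
  have hroot : ∀ c ∈ (w - C β).roots, w.eval c = β := by
    intro c hc
    have := (mem_roots hw0).1 hc
    simpa [sub_eq_zero] using this
  have hcard : (w - C β).roots.card = w.natDegree := by
    rw [← hwd]; exact splits_iff_card_roots.1 (IsAlgClosed.splits _)
  have hall : ∀ c ∈ (w - C β).roots, c = 0 := by
    intro c hc
    by_contra hc0
    obtain ⟨h2, h3⟩ := hg c hc0 (hcrit c (hroot c hc))
    -- every root equals c
    have heq : ∀ d ∈ (w - C β).roots, d = c := by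
      intro d hd
      by_contra hdc
      exact h3 d hdc (hcrit d (hroot d hd)) ((hval d (hroot d hd)).trans (hval c (hroot c hc)).symm)
    have hrep := Multiset.eq_replicate.2 ⟨hcard, heq⟩
    have hmul : 1 < (w - C β).rootMultiplicity c := by
      rw [← count_roots, hrep, Multiset.count_replicate_self]; omega
    have hd := (one_lt_rootMultiplicity_iff_isRoot hw0).1 hmul
    have hwc : w.derivative.eval c = 0 := by simpa using hd.2
    apply h2
    rw [h, derivative_comp, derivative_mul, derivative_comp]
    simp [hwc, hroot c hc, hβ]
  have hrep := Multiset.eq_replicate.2 ⟨hcard, hall⟩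
  have hprod := (IsAlgClosed.splits (w - C β)).eq_prod_roots
  rw [hrep] at hprod
  simp only [Multiset.map_replicate, Multiset.prod_replicate, map_zero, sub_zero] at hprod
  set m := w.natDegree with hm
  set l := (w - C β).leadingCoeff
  have hgexp : g = expand ℂ m (u.comp (C l * X + C β)) := by
    rw [h, expand_eq_comp_X_pow, comp_assoc]
    congr 1
    rw [sub_eq_iff_eq_add] at hprod
    simpa using hprod
  have hms : m ∣ s := by
    by_contra hns
    apply hs
    rw [hgexp, coeff_expand (by omega), if_neg hns]
  have hmn : m ∣ g.natDegree := by
    rw [h, natDegree_comp]; exact dvd_mul_left _ _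
  have := Nat.dvd_gcd hmn hms
  rw [hco] at this
  have := Nat.le_of_dvd one_pos this
  omega

theorem powerSeries_hensel (p : (PowerSeries ℂ)[X]) (hp : p.Monic) (y : ℂ)
    (h0 : (p.map PowerSeries.constantCoeff).eval y = 0)
    (h1 : (p.map PowerSeries.constantCoeff).derivative.eval y ≠ 0) :
    ∃ b : PowerSeries ℂ, p.eval b = 0 ∧ PowerSeries.constantCoeff b = y := by
  have key : ∀ q : (PowerSeries ℂ)[X], PowerSeries.constantCoeff (q.eval (PowerSeries.C y)) =
      (q.map PowerSeries.constantCoeff).eval y := by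
    intro q
    rw [← eval₂_hom, eval_map]; simp
  have H := HenselianRing.is_henselian (R := PowerSeries ℂ)
    (I := Ideal.span {(PowerSeries.X : PowerSeries ℂ)}) p hp (PowerSeries.C y)
    (by rw [Ideal.mem_span_singleton, PowerSeries.X_dvd_iff, key, h0])
    (by
      apply IsUnit.map
      rw [PowerSeries.isUnit_iff_constantCoeff, key, ← derivative_map]
      exact isUnit_iff_ne_zero.2 h1)
  obtain ⟨b, hb, hb'⟩ := H
  refine ⟨b, hb, ?_⟩
  rw [Ideal.mem_span_singleton, PowerSeries.X_dvd_iff] at hb'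
  simpa [sub_eq_zero] using hb'

/-- the two conjugate roots near a simple critical point -/
theorem exists_root_ramified (g : ℂ[X]) (hm : g.Monic) (c : ℂ)
    (h1 : g.derivative.eval c = 0) (h2 : g.derivative.derivative.eval c ≠ 0) (z : ℂ)
    (hz : z ^ 2 = - (taylor c g).coeff 2) :
    ∃ b : PowerSeries ℂ, (g.map PowerSeries.C).eval b =
        PowerSeries.C (g.eval c) - PowerSeries.X ^ 2 ∧
      PowerSeries.constantCoeff b = c ∧ PowerSeries.coeff 1 b = z⁻¹ := by
  set q := taylor c g with hq
  set n := g.natDegree with hn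
  have hqn : q.natDegree = n := natDegree_taylor g c
  have hq0 : q.coeff 0 = g.eval c := taylor_coeff_zero ..
  have hq1 : q.coeff 1 = 0 := by rw [hq, taylor_coeff_one, h1]
  have hq2 : q.coeff 2 ≠ 0 := by
    intro h
    apply h2
    have h3 : (derivative (derivative q)).coeff 0 = 0 := by
      simp [coeff_derivative, h]
    have h4 : (taylor c (derivative (derivative g))).coeff 0 = 0 := by
      rw [← h3, hq]; simp [taylor_apply, derivative_comp]
    rwa [taylor_coeff_zero] at h4
  have hn2 : 2 ≤ n := by
    by_contra hlt
    exact hq2 (coeff_eq_zero_of_natDegree_lt (by omega))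
  have hz0 : z ≠ 0 := by
    rintro rfl
    apply hq2; rw [← neg_eq_zero, ← hz]; simp
  let P : (PowerSeries ℂ)[X] := X ^ n + ∑ i ∈ Finset.Icc 2 n,
    C (PowerSeries.C (q.coeff i) * PowerSeries.X ^ (i - 2)) * X ^ (n - i)
  have hPm : P.Monic := by
    apply monic_X_pow_add
    refine lt_of_le_of_lt (degree_sum_le _ _) ?_
    rw [Finset.sup_lt_iff (by exact WithBot.bot_lt_coe n)]
    intro i hi
    rw [Finset.mem_Icc] at hi
    refine lt_of_le_of_lt (degree_C_mul_X_pow_le _ _) ?_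
    exact_mod_cast (by omega : n - i < n)
  have hPmap : P.map PowerSeries.constantCoeff = X ^ n + C (q.coeff 2) * X ^ (n - 2) := by
    simp only [P, Polynomial.map_add, Polynomial.map_pow, map_X, Polynomial.map_sum,
      Polynomial.map_mul, map_C]
    congr 1
    rw [Finset.sum_eq_single 2]
    · simp
    · intro i hi h
      rw [Finset.mem_Icc] at hi
      have : i - 2 ≠ 0 := by omega
      simp [this]
    · intro h; simp at h; omega
  obtain ⟨k, hk⟩ : ∃ k, n = k + 2 := ⟨n - 2, by omega⟩
  obtain ⟨Y, hY, hY0⟩ := powerSeries_hensel P hPm z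
    (by
      rw [hPmap, hk]
      simp only [eval_add, eval_pow, eval_X, eval_mul, eval_C, Nat.add_sub_cancel]
      rw [pow_add, hz]; ring)
    (by
      rw [hPmap, hk]
      have e : (X ^ (k + 2) + C (q.coeff 2) * X ^ (k + 2 - 2) : ℂ[X]) =
        X ^ k * (X ^ 2 + C (q.coeff 2)) := by simp; ring
      rw [e, derivative_mul]
      simp only [eval_add, eval_pow, eval_X, eval_mul, eval_C, hz, derivative_add, derivative_C,
        derivative_X_pow]
      simp [hz0])
  have hYu : Y * Y⁻¹ = 1 := PowerSeries.mul_inv_cancel _ (by rw [hY0]; exact hz0)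
  refine ⟨PowerSeries.C c + PowerSeries.X * Y⁻¹, ?_, ?_, ?_⟩
  · have e1 : (g.map PowerSeries.C).eval (PowerSeries.C c + PowerSeries.X * Y⁻¹) =
        (q.map PowerSeries.C).eval (PowerSeries.X * Y⁻¹) := by
      rw [hq, taylor_apply, Polynomial.map_comp, eval_comp]
      simp [add_comm]
    rw [e1, eval_eq_sum_range' (n := n + 1)
      (by rw [natDegree_map_eq_of_injective PowerSeries.C_injective]; omega)]
    have hY' : Y ^ n + ∑ i ∈ Finset.Icc 2 n,
        (PowerSeries.C (q.coeff i) * PowerSeries.X ^ (i - 2)) * Y ^ (n - i) = 0 := by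
      rw [← hY]; simp [P, eval_finsetSum]
    have e2 : ∑ i ∈ Finset.range (n + 1), (q.map PowerSeries.C).coeff i *
        (PowerSeries.X * Y⁻¹) ^ i = PowerSeries.C (q.coeff 0) + ∑ i ∈ Finset.Icc 2 n,
          PowerSeries.C (q.coeff i) * (PowerSeries.X * Y⁻¹) ^ i := by
      have : Finset.range (n + 1) = insert 0 (insert 1 (Finset.Icc 2 n)) := by
        ext i; simp; omega
      rw [this, Finset.sum_insert (by simp), Finset.sum_insert (by simp)]
      simp [hq1]
    rw [e2, hq0, sub_eq_add_neg]
    congr 1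
    have e3 : ∑ i ∈ Finset.Icc 2 n, PowerSeries.C (q.coeff i) * (PowerSeries.X * Y⁻¹) ^ i =
      PowerSeries.X ^ 2 * (Y⁻¹) ^ n * ∑ i ∈ Finset.Icc 2 n,
        (PowerSeries.C (q.coeff i) * PowerSeries.X ^ (i - 2)) * Y ^ (n - i) := by
      rw [Finset.mul_sum]
      apply Finset.sum_congr rfl
      intro i hi
      rw [Finset.mem_Icc] at hi
      obtain ⟨j, rfl⟩ : ∃ j, i = j + 2 := ⟨i - 2, by omega⟩
      obtain ⟨l, hl⟩ : ∃ l, n = (j + 2) + l := ⟨n - (j + 2), by omega⟩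
      rw [hl]
      simp only [Nat.add_sub_cancel, Nat.add_sub_cancel_left]
      have : Y⁻¹ ^ (j + 2 + l) * Y ^ l = Y⁻¹ ^ (j + 2) := by
        rw [pow_add, mul_assoc, ← mul_pow, mul_comm Y⁻¹ Y, hYu, one_pow, mul_one]
      rw [mul_pow, ← this]; ring
    rw [e3, eq_neg_iff_add_eq_zero.2 ((add_comm _ _).trans hY')]
    rw [mul_neg, mul_assoc, ← mul_pow, mul_comm Y⁻¹ Y, hYu]; simp
  · simp
  · rw [map_add, ← zero_add 1, PowerSeries.coeff_succ_X_mul]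
    simp [hY0]

theorem exists_all_roots (g : ℂ[X]) (hm : g.Monic) (c : ℂ)
    (h1 : g.derivative.eval c = 0) (h2 : g.derivative.derivative.eval c ≠ 0)
    (h3 : ∀ d, d ≠ c → g.eval d = g.eval c → g.derivative.eval d ≠ 0) :
    ∃ (S : Finset (PowerSeries ℂ)) (b₁ b₂ : PowerSeries ℂ), S.card = g.natDegree ∧ b₁ ∈ S ∧
      b₂ ∈ S ∧ b₁ ≠ b₂ ∧ PowerSeries.rescale (-1 : ℂ) b₁ ≠ b₁ ∧
      PowerSeries.constantCoeff b₁ = c ∧ PowerSeries.constantCoeff b₂ = c ∧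
      (∀ b ∈ S, (g.map PowerSeries.C).eval b = PowerSeries.C (g.eval c) - PowerSeries.X ^ 2) ∧
      (∀ b ∈ S, PowerSeries.constantCoeff b = c → b = b₁ ∨ b = b₂) ∧
      (∀ b ∈ S, ∀ b' ∈ S, PowerSeries.constantCoeff b = PowerSeries.constantCoeff b' →
        PowerSeries.constantCoeff b ≠ c → b = b') := by
  classical
  have hq2 : (taylor c g).coeff 2 ≠ 0 := by
    intro h
    apply h2
    have h3 : (derivative (derivative (taylor c g))).coeff 0 = 0 := by
      simp [coeff_derivative, h]
    have h4 : (taylor c (derivative (derivative g))).coeff 0 = 0 := by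
      rw [← h3]; simp [taylor_apply, derivative_comp]
    rwa [taylor_coeff_zero] at h4
  have hn2 : 2 ≤ g.natDegree := by
    by_contra hlt
    exact hq2 (coeff_eq_zero_of_natDegree_lt (by rw [natDegree_taylor]; omega))
  obtain ⟨z, hz⟩ := IsAlgClosed.exists_pow_nat_eq (-(taylor c g).coeff 2) (n := 2) (by norm_num)
  have hz0 : z ≠ 0 := by
    rintro rfl
    apply hq2; rw [← neg_eq_zero, ← hz]; simp
  obtain ⟨b₁, hb₁, hc₁, hl₁⟩ := exists_root_ramified g hm c h1 h2 z hz
  obtain ⟨b₂, hb₂, hc₂, hl₂⟩ := exists_root_ramified g hm c h1 h2 (-z) (by rw [neg_sq, hz])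
  set p := g - C (g.eval c) with hp
  have hpd : p.natDegree = g.natDegree := natDegree_sub_C
  have hp0 : p ≠ 0 := by
    intro h0; rw [h0, natDegree_zero] at hpd; omega
  have hpder : p.derivative = g.derivative := by simp [hp]
  have hroot : ∀ d, d ∈ p.roots ↔ g.eval d = g.eval c := by
    intro d; rw [mem_roots hp0]; simp [hp, sub_eq_zero]
  have hcard : p.roots.card = g.natDegree := by
    rw [← hpd]; exact splits_iff_card_roots.1 (IsAlgClosed.splits _)
  have hcountc : p.roots.count c = 2 := by
    rw [count_roots]
    have ha : 1 < p.rootMultiplicity c :=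
      (one_lt_rootMultiplicity_iff_isRoot hp0).2
        ⟨by simp [hp], by rw [hpder]; exact h1⟩
    by_contra hne
    have hb : 2 < p.rootMultiplicity c := by omega
    have := isRoot_iterate_derivative_of_lt_rootMultiplicity hb
    apply h2
    simpa [hpder] using this
  have hcountd : ∀ d ∈ p.roots.toFinset.erase c, p.roots.count d = 1 := by
    intro d hd
    rw [Finset.mem_erase, Multiset.mem_toFinset] at hd
    have hpos : 0 < p.roots.count d := Multiset.count_pos.2 hd.2
    by_contra hne
    have : 1 < p.rootMultiplicity d := by rw [← count_roots]; omega
    have := ((one_lt_rootMultiplicity_iff_isRoot hp0).1 this).2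
    rw [hpder] at this
    exact h3 d hd.1 ((hroot d).1 hd.2) this
  have hDcard : (p.roots.toFinset.erase c).card = g.natDegree - 2 := by
    have hs := Multiset.toFinset_sum_count_eq p.roots
    have hcm : c ∈ p.roots.toFinset := by
      rw [Multiset.mem_toFinset, hroot]
    rw [← Finset.add_sum_erase _ _ hcm, Finset.sum_congr rfl hcountd, hcountc, hcard] at hs
    simp only [Finset.sum_const, smul_eq_mul, mul_one] at hs
    omega
  have hex : ∀ d : ℂ, ∃ b : PowerSeries ℂ, d ∈ p.roots.toFinset.erase c →
      (g.map PowerSeries.C).eval b = PowerSeries.C (g.eval c) - PowerSeries.X ^ 2 ∧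
      PowerSeries.constantCoeff b = d := by
    intro d
    by_cases hd : d ∈ p.roots.toFinset.erase c
    · have hmap : (g.map PowerSeries.C - C (PowerSeries.C (g.eval c) - PowerSeries.X ^ 2)).map
          PowerSeries.constantCoeff = p := by
        rw [Polynomial.map_sub, Polynomial.map_map, map_C]
        have : (PowerSeries.constantCoeff (R := ℂ)).comp PowerSeries.C = RingHom.id ℂ := by
          ext; simp
        rw [this]; simp [hp]
      have hd' := hd
      rw [Finset.mem_erase, Multiset.mem_toFinset] at hd'
      obtain ⟨b, hb, hb'⟩ := powerSeries_hensel
        (g.map PowerSeries.C - C (PowerSeries.C (g.eval c) - PowerSeries.X ^ 2))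
        ((hm.map _).sub_of_left (by
          refine lt_of_le_of_lt degree_C_le ?_
          rw [degree_map_eq_of_injective PowerSeries.C_injective,
            degree_eq_natDegree hm.ne_zero]
          exact_mod_cast (by omega : 0 < g.natDegree))) d
        (by rw [hmap]; exact (mem_roots hp0).1 hd'.2)
        (by rw [hmap, hpder]; exact h3 d hd'.1 ((hroot d).1 hd'.2))
      refine ⟨b, fun _ => ⟨?_, hb'⟩⟩
      simpa [sub_eq_zero] using hb
    · exact ⟨0, fun h => absurd h hd⟩
  choose B hB using hex
  have hinj : Set.InjOn B (p.roots.toFinset.erase c : Finset ℂ) := by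
    intro d hd d' hd' h
    rw [← (hB d hd).2, h, (hB d' hd').2]
  have hb12 : b₁ ≠ b₂ := by
    intro h
    rw [h, hl₂] at hl₁
    have := inv_injective hl₁
    apply hz0
    linear_combination (-1/2 : ℂ) * this
  have hBc : ∀ b ∈ (p.roots.toFinset.erase c).image B, PowerSeries.constantCoeff b ≠ c := by
    intro b hb
    obtain ⟨d, hd, rfl⟩ := Finset.mem_image.1 hb
    rw [(hB d hd).2]
    exact (Finset.mem_erase.1 hd).1
  refine ⟨insert b₁ (insert b₂ ((p.roots.toFinset.erase c).image B)), b₁, b₂, ?_, by simp,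
    by simp, hb12, ?_, hc₁, hc₂, ?_, ?_, ?_⟩
  · rw [Finset.card_insert_of_notMem, Finset.card_insert_of_notMem,
      Finset.card_image_of_injOn hinj, hDcard]
    · omega
    · intro h; exact hBc _ h hc₂
    · rw [Finset.mem_insert, not_or]
      exact ⟨hb12, fun h => hBc _ h hc₁⟩
  · intro h
    have := congrArg (PowerSeries.coeff 1) h
    rw [PowerSeries.coeff_rescale, hl₁] at this
    have h0 : z⁻¹ = 0 := by linear_combination (-1/2 : ℂ) * this
    exact hz0 (inv_eq_zero.1 h0)
  · intro b hb
    rw [Finset.mem_insert, Finset.mem_insert] at hb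
    rcases hb with rfl | rfl | hb
    · exact hb₁
    · exact hb₂
    · obtain ⟨d, hd, rfl⟩ := Finset.mem_image.1 hb
      exact (hB d hd).1
  · intro b hb hbc
    rw [Finset.mem_insert, Finset.mem_insert] at hb
    rcases hb with h | h | hb
    · exact Or.inl h
    · exact Or.inr h
    · exact absurd hbc (hBc b hb)
  · intro b hb b' hb' he hne
    have aux : ∀ b ∈ insert b₁ (insert b₂ ((p.roots.toFinset.erase c).image B)),
        PowerSeries.constantCoeff b ≠ c → b = B (PowerSeries.constantCoeff b) := by
      intro b hb hne
      rw [Finset.mem_insert, Finset.mem_insert] at hb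
      rcases hb with rfl | rfl | hb
      · exact absurd hc₁ hne
      · exact absurd hc₂ hne
      · obtain ⟨d, hd, rfl⟩ := Finset.mem_image.1 hb
        rw [(hB d hd).2]
    rw [aux b hb hne, aux b' hb' (he ▸ hne), he]

/-- The polynomial `g(X) + t` over `ℚ(t)`. -/
noncomputable def genPoly (g : ℚ[X]) : (RatFunc ℚ)[X] :=
  g.map (algebraMap ℚ (RatFunc ℚ)) + C RatFunc.X

theorem genPoly_monic {g : ℚ[X]} (hm : g.Monic) (hn : 0 < g.natDegree) : (genPoly g).Monic := by
  apply (hm.map _).add_of_left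
  refine lt_of_le_of_lt degree_C_le ?_
  rw [degree_map_eq_of_injective (algebraMap ℚ (RatFunc ℚ)).injective,
    degree_eq_natDegree hm.ne_zero]
  exact_mod_cast hn

theorem genPoly_natDegree (g : ℚ[X]) : (genPoly g).natDegree = g.natDegree := by
  rw [genPoly, natDegree_add_C, natDegree_map_eq_of_injective (algebraMap ℚ (RatFunc ℚ)).injective]

theorem genPoly_irreducible {g : ℚ[X]} (hm : g.Monic) (hn : 0 < g.natDegree) :
    Irreducible (genPoly g) := by
  have hmon : (g.map (C : ℚ →+* ℚ[X]) + C X : ℚ[X][X]).Monic := by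
    apply (hm.map _).add_of_left
    refine lt_of_le_of_lt degree_C_le ?_
    rw [degree_map_eq_of_injective C_injective, degree_eq_natDegree hm.ne_zero]
    exact_mod_cast hn
  have hmap : (g.map (C : ℚ →+* ℚ[X]) + C X : ℚ[X][X]).map (algebraMap ℚ[X] (RatFunc ℚ)) =
      genPoly g := by
    rw [Polynomial.map_add, Polynomial.map_map, map_C, genPoly, RatFunc.algebraMap_X]
    congr 2
    exact Subsingleton.elim _ _
  rw [← hmap, ← hmon.irreducible_iff_irreducible_map_fraction_map]
  have hirr : Irreducible (X - C (-g) : ℚ[X][X]) := (prime_X_sub_C _).irreducible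
  have hswap : Bivariate.swap (X - C (-g) : ℚ[X][X]) = g.map (C : ℚ →+* ℚ[X]) + C X := by
    rw [map_sub, Bivariate.swap_Y, Bivariate.swap_C]
    simp [add_comm]
  rw [← hswap]
  exact (MulEquiv.irreducible_iff (Bivariate.swap (R := ℚ))).2 hirr

theorem transcendental_uniformizer (τ : ℂ) : Function.Injective
    (eval₂RingHom (algebraMap ℚ (PowerSeries ℂ)) (PowerSeries.C τ + PowerSeries.X ^ 2)) := by
  rw [injective_iff_map_eq_zero]
  intro p hp
  have h1 : ((((p.map (algebraMap ℚ ℂ)).comp (C τ + X ^ 2) : ℂ[X])) : PowerSeries ℂ) =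
      eval₂ (algebraMap ℚ (PowerSeries ℂ)) (PowerSeries.C τ + PowerSeries.X ^ 2) p := by
    rw [← Polynomial.coeToPowerSeries.ringHom_apply, comp, eval₂_map, hom_eval₂]
    congr 1
    · exact Subsingleton.elim _ _
    · simp [Polynomial.coeToPowerSeries.ringHom_apply]
  rw [coe_eval₂RingHom] at hp
  rw [hp, ← Polynomial.coe_zero, Polynomial.coe_inj] at h1
  have h2 : (C τ + X ^ 2 : ℂ[X]).natDegree = 2 := by
    rw [add_comm]; compute_degree!
  rw [comp_eq_zero_iff] at h1
  rcases h1 with h1 | ⟨-, h1⟩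
  · exact (Polynomial.map_eq_zero _).1 h1
  · rw [h1, natDegree_C] at h2; omega

theorem gal_of_preprimitive (g : ℚ[X]) (hm : g.Monic) (c : ℂ)
    (h1 : (g.map (algebraMap ℚ ℂ)).derivative.eval c = 0)
    (h2 : (g.map (algebraMap ℚ ℂ)).derivative.derivative.eval c ≠ 0)
    (h3 : ∀ d, d ≠ c → (g.map (algebraMap ℚ ℂ)).eval d = (g.map (algebraMap ℚ ℂ)).eval c →
      (g.map (algebraMap ℚ ℂ)).derivative.eval d ≠ 0)
    (hprim : MulAction.IsPreprimitive (genPoly g).Gal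
      ((genPoly g).rootSet (genPoly g).SplittingField)) :
    Nonempty ((genPoly g).Gal ≃* Equiv.Perm (Fin g.natDegree)) := by
  classical
  obtain ⟨S, b₁, b₂, hcard, hb₁, hb₂, hb12, hres, hc₁, hc₂, hS, hSc, hSd⟩ :=
    exists_all_roots _ (hm.map (algebraMap ℚ ℂ)) c h1 h2 h3
  set gc := g.map (algebraMap ℚ ℂ) with hgc
  rw [hm.natDegree_map] at hcard
  set τ : ℂ := - gc.eval c with hτ
  let F := FractionRing (PowerSeries ℂ)
  let ι : PowerSeries ℂ →+* F := algebraMap (PowerSeries ℂ) F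
  have hι : Function.Injective ι := IsFractionRing.injective (PowerSeries ℂ) F
  let φ₀ : ℚ[X] →+* F := ι.comp
    (eval₂RingHom (algebraMap ℚ (PowerSeries ℂ)) (PowerSeries.C τ + PowerSeries.X ^ 2))
  have hφ₀ : Function.Injective φ₀ := hι.comp (transcendental_uniformizer τ)
  let φ : RatFunc ℚ →+* F := IsFractionRing.lift hφ₀
  have hφX : φ RatFunc.X = ι (PowerSeries.C τ + PowerSeries.X ^ 2) := by
    rw [← RatFunc.algebraMap_X]
    refine (IsFractionRing.lift_algebraMap hφ₀ X).trans ?_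
    simp [φ₀]
  let : Algebra (RatFunc ℚ) F := φ.toAlgebra
  have halg : algebraMap (RatFunc ℚ) F = φ := rfl
  set f := genPoly g with hf
  have hfmap : f.map (algebraMap (RatFunc ℚ) F) =
      (gc.map (PowerSeries.C) + C (PowerSeries.C τ + PowerSeries.X ^ 2)).map ι := by
    rw [hf, genPoly, Polynomial.map_add, Polynomial.map_add, map_C, map_C, halg, hφX]
    congr 1
    rw [hgc, Polynomial.map_map, Polynomial.map_map, Polynomial.map_map]
    congr 1
    exact Subsingleton.elim _ _
  have hdeg : f.natDegree = g.natDegree := genPoly_natDegree g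
  have hn : 0 < g.natDegree := by rw [← hcard]; exact Finset.card_pos.2 ⟨_, hb₁⟩
  have hfm : f.Monic := genPoly_monic hm hn
  have hroots : ∀ b ∈ S, ι b ∈ (f.map (algebraMap (RatFunc ℚ) F)).roots := by
    intro b hb
    rw [mem_roots (hfm.map _).ne_zero, IsRoot.def, hfmap, eval_map_apply, eval_add, hS b hb, hτ]
    simp
  have hsub : S.image ι ⊆ (f.map (algebraMap (RatFunc ℚ) F)).roots.toFinset := by
    intro y hy
    obtain ⟨b, hb, rfl⟩ := Finset.mem_image.1 hy
    exact Multiset.mem_toFinset.2 (hroots b hb)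
  have hcardS : (S.image ι).card = g.natDegree := by
    rw [Finset.card_image_of_injective _ hι, hcard]
  have hle2 : (f.map (algebraMap (RatFunc ℚ) F)).roots.toFinset.card ≤ g.natDegree := by
    refine (Multiset.toFinset_card_le _).trans ((card_roots' _).trans ?_)
    rw [hfm.natDegree_map, hdeg]
  have hSeq : S.image ι = (f.map (algebraMap (RatFunc ℚ) F)).roots.toFinset :=
    Finset.eq_of_subset_of_card_le hsub (by rw [hcardS]; exact hle2)
  have hsplit : (f.map (algebraMap (RatFunc ℚ) F)).Splits := by
    rw [splits_iff_card_roots]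
    refine le_antisymm (card_roots' _) ?_
    rw [hfm.natDegree_map, hdeg, ← hcardS, hSeq]
    exact Multiset.toFinset_card_le _
  have : Fact (f.map (algebraMap (RatFunc ℚ) F)).Splits := ⟨hsplit⟩
  -- the involution
  have hinv : (PowerSeries.rescale (-1 : ℂ)).comp (PowerSeries.rescale (-1 : ℂ)) =
      RingHom.id _ := by
    rw [← PowerSeries.rescale_mul]; simp
  let ρ : PowerSeries ℂ ≃+* PowerSeries ℂ := RingEquiv.ofRingHom
    (PowerSeries.rescale (-1 : ℂ)) (PowerSeries.rescale (-1 : ℂ))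
    hinv hinv
  have hρ : ∀ b, ρ b = PowerSeries.rescale (-1 : ℂ) b := fun b => rfl
  let σ₀ : F ≃+* F := IsFractionRing.ringEquivOfRingEquiv ρ
  have hσι : ∀ b, σ₀ (ι b) = ι (PowerSeries.rescale (-1 : ℂ) b) := by
    intro b
    exact IsFractionRing.ringEquivOfRingEquiv_algebraMap ρ b
  have hσφ : ∀ x, σ₀ (φ x) = φ x := by
    have : (σ₀ : F →+* F).comp φ = φ := by
      apply IsLocalization.ringHom_ext (nonZeroDivisors ℚ[X])
      apply Polynomial.ringHom_ext'
      · exact Subsingleton.elim _ _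
      · simp only [RingHom.comp_apply, RatFunc.algebraMap_X, hφX]
        refine (hσι _).trans ?_
        congr 1
        rw [map_add, map_pow, PowerSeries.rescale_X]
        have : PowerSeries.rescale (-1 : ℂ) (PowerSeries.C τ) = PowerSeries.C τ := by
          ext i; rcases i with _ | i <;> simp [PowerSeries.coeff_C]
        rw [this]; simp
    exact fun x => RingHom.congr_fun this x
  let σ : F ≃ₐ[RatFunc ℚ] F := AlgEquiv.ofRingEquiv (f := σ₀) hσφ
  have hmem : ∀ y : F, y ∈ f.rootSet F ↔ ∃ b ∈ S, ι b = y := by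
    intro y
    rw [← Finset.mem_image, hSeq, Multiset.mem_toFinset]
    simp [rootSet, aroots]
  let B₁ : f.rootSet F := ⟨ι b₁, (hmem _).2 ⟨b₁, hb₁, rfl⟩⟩
  let B₂ : f.rootSet F := ⟨ι b₂, (hmem _).2 ⟨b₂, hb₂, rfl⟩⟩
  have hact : ∀ x : f.rootSet F, ((Gal.galActionHom f F (Gal.restrict f F σ) x : f.rootSet F) : F)
      = σ₀ x := by
    intro x
    exact Gal.restrict_smul σ x
  have hconst : ∀ b : PowerSeries ℂ, PowerSeries.constantCoeff (PowerSeries.rescale (-1 : ℂ) b) =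
      PowerSeries.constantCoeff b := by
    intro b
    rw [← PowerSeries.coeff_zero_eq_constantCoeff_apply, PowerSeries.coeff_rescale]; simp
  have hstab : ∀ b ∈ S, PowerSeries.rescale (-1 : ℂ) b ∈ S := by
    intro b hb
    have h := (Gal.galActionHom f F (Gal.restrict f F σ) ⟨ι b, (hmem _).2 ⟨b, hb, rfl⟩⟩).2
    rw [hact, hσι] at h
    obtain ⟨b', hb', he⟩ := (hmem _).1 h
    rw [← hι he]; exact hb'
  have hr1 : PowerSeries.rescale (-1 : ℂ) b₁ = b₂ := by
    rcases hSc _ (hstab b₁ hb₁) ((hconst b₁).trans hc₁) with h | h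
    · exact absurd h hres
    · exact h
  have hr2 : PowerSeries.rescale (-1 : ℂ) b₂ = b₁ := by
    rw [← hr1, ← hρ, ← hρ]; exact ρ.left_inv b₁
  have hswap : Gal.galActionHom f F (Gal.restrict f F σ) = Equiv.swap B₁ B₂ := by
    ext x
    rw [hact]
    obtain ⟨b, hb, hbx⟩ := (hmem _).1 x.2
    rw [← hbx, hσι]
    by_cases e1 : b = b₁
    · subst e1
      have : x = B₁ := Subtype.ext hbx.symm
      rw [this, Equiv.swap_apply_left, hr1]
    by_cases e2 : b = b₂
    · subst e2
      have : x = B₂ := Subtype.ext hbx.symm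
      rw [this, Equiv.swap_apply_right, hr2]
    have hx1 : x ≠ B₁ := by
      rintro rfl; exact e1 (hι hbx)
    have hx2 : x ≠ B₂ := by
      rintro rfl; exact e2 (hι hbx)
    rw [Equiv.swap_apply_of_ne_of_ne hx1 hx2, ← hbx]
    congr 1
    refine hSd _ (hstab b hb) _ hb (hconst b) ?_
    rw [hconst]
    intro h
    rcases hSc b hb h with h | h
    · exact e1 h
    · exact e2 h
  have hB12 : B₁ ≠ B₂ := by
    intro h; exact hb12 (hι (congrArg Subtype.val h))
  -- preprimitivity transfers
  let e : f.rootSet f.SplittingField ≃ f.rootSet F := Gal.rootsEquivRoots f F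
  have hprimF : MulAction.IsPreprimitive (Gal.galActionHom f F).range (f.rootSet F) := by
    let m : f.rootSet f.SplittingField →ₑ[fun s : f.Gal => (Gal.galActionHom f F).rangeRestrict s]
        f.rootSet F :=
      { toFun := e
        map_smul' := by
          intro s x
          change _ = s • (e x)
          rw [Gal.smul_def]
          simp [e] }
    exact MulAction.IsPreprimitive.of_surjective (f := m) e.surjective
  have htop := Equiv.Perm.subgroup_eq_top_of_isPreprimitive_of_isSwap_mem hprimF
    (Gal.galActionHom f F (Gal.restrict f F σ)) ⟨B₁, B₂, hB12, hswap⟩ ⟨_, rfl⟩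
  have hbij : Function.Bijective (Gal.galActionHom f F) :=
    ⟨Gal.galActionHom_injective f F, MonoidHom.range_eq_top.1 htop⟩
  have hcardF : Fintype.card (f.rootSet F) = g.natDegree := by
    rw [← hcardS, ← Set.toFinset_card]
    congr 1
    ext y
    rw [Set.mem_toFinset, hmem, Finset.mem_image]
  exact ⟨(MulEquiv.ofBijective _ hbij).trans
    (Equiv.permCongrHom (Fintype.equivFinOfCardEq hcardF))⟩

theorem monic_diff {w : ℚ[X]} (hm : w.Monic) (hd : 0 < w.natDegree) :
    (w.map (C : ℚ →+* ℚ[X]) - C w).Monic := by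
  apply (hm.map _).sub_of_left
  refine lt_of_le_of_lt degree_C_le ?_
  rw [degree_map_eq_of_injective C_injective, degree_eq_natDegree hm.ne_zero]
  exact_mod_cast hd

theorem natDegree_diff (w : ℚ[X]) : (w.map (C : ℚ →+* ℚ[X]) - C w).natDegree = w.natDegree := by
  rw [natDegree_sub_C, natDegree_map_eq_of_injective C_injective]

theorem exists_comp_of_dvd (w : ℚ[X]) (hm : w.Monic) (hd : 0 < w.natDegree) :
    ∀ (N : ℕ) (g : ℚ[X]), g.natDegree ≤ N →
      (w.map (C : ℚ →+* ℚ[X]) - C w) ∣ (g.map (C : ℚ →+* ℚ[X]) - C g) →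
      ∃ u : ℚ[X], g = u.comp w := by
  intro N
  induction N with
  | zero =>
    intro g hg _
    rw [eq_C_of_natDegree_eq_zero (Nat.le_zero.1 hg)]
    exact ⟨C _, (C_comp).symm⟩
  | succ N ih =>
    intro g hg hdvd
    set q := g /ₘ w with hq
    set r := g %ₘ w with hr
    have hgqr : g = r + w * q := (modByMonic_add_div g w).symm
    have hrdeg : r.natDegree < w.natDegree := natDegree_modByMonic_lt g hm (by
      rintro rfl; simp at hd)
    have hdiff : g.map (C : ℚ →+* ℚ[X]) - C g = (w.map C - C w) * q.map C +
        (C w * (q.map C - C q) + (r.map C - C r)) := by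
      conv_lhs => rw [hgqr]
      simp only [Polynomial.map_add, Polynomial.map_mul, C_add, C_mul]
      ring
    have hdvd2 : (w.map (C : ℚ →+* ℚ[X]) - C w) ∣
        (C w * (q.map C - C q) + (r.map C - C r)) := by
      rw [hdiff] at hdvd
      exact (dvd_add_right (dvd_mul_right _ _)).1 hdvd
    -- r is constant
    have hrc : r.natDegree = 0 := by
      obtain ⟨y, hy⟩ := IsAlgClosed.exists_aeval_eq_zero ℂ w (by
        rw [degree_eq_natDegree hm.ne_zero]; exact_mod_cast hd.ne')
      let ev : ℚ[X] →+* ℂ := (aeval y : ℚ[X] →ₐ[ℚ] ℂ).toRingHom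
      have hev : ev.comp (C : ℚ →+* ℚ[X]) = algebraMap ℚ ℂ := Subsingleton.elim _ _
      have hevw : ev w = 0 := hy
      have h := Polynomial.map_dvd ev hdvd2
      simp only [Polynomial.map_add, Polynomial.map_sub, Polynomial.map_mul, map_C, hevw,
        Polynomial.map_map, hev, C_0, zero_mul, zero_add, sub_zero] at h
      by_contra hne
      have h2 : (r.map (algebraMap ℚ ℂ) - C (ev r)).natDegree = r.natDegree := by
        rw [natDegree_sub_C, natDegree_map]
      have h3 : r.map (algebraMap ℚ ℂ) - C (ev r) ≠ 0 := by
        intro h0; rw [h0, natDegree_zero] at h2; exact hne h2.symm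
      have h4 := natDegree_le_of_dvd h h3
      rw [h2, natDegree_map] at h4
      omega
    have hrC := eq_C_of_natDegree_eq_zero hrc
    have hdvd3 : (w.map (C : ℚ →+* ℚ[X]) - C w) ∣ C w * (q.map C - C q) := by
      have : r.map (C : ℚ →+* ℚ[X]) - C r = 0 := by rw [hrC]; simp
      rwa [this, add_zero] at hdvd2
    have hdvd4 : (w.map (C : ℚ →+* ℚ[X]) - C w) ∣ (q.map C - C q) := by
      rw [← map_dvd_map (algebraMap ℚ[X] (RatFunc ℚ)) (IsFractionRing.injective _ _)
        (monic_diff hm hd)] at hdvd3 ⊢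
      rw [Polynomial.map_mul, map_C] at hdvd3
      refine (IsUnit.dvd_mul_left ?_).1 hdvd3
      rw [isUnit_C, isUnit_iff_ne_zero]
      exact (map_ne_zero_iff _ (IsFractionRing.injective ℚ[X] (RatFunc ℚ))).2 hm.ne_zero
    obtain ⟨u, hu⟩ := ih q (by rw [hq, natDegree_divByMonic g hm]; omega) hdvd4
    refine ⟨C (r.coeff 0) + X * u, ?_⟩
    rw [add_comp, C_comp, mul_comp, X_comp, ← hu, ← hrC]
    exact hgqr

/-- total degree bound -/
theorem coeff_zero_natDegree (g : ℚ[X]) (hn : 0 < g.natDegree) (P R : ℚ[X][X]) (hP : P.Monic)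
    (hR : R.Monic) (h : P * R = g.map (C : ℚ →+* ℚ[X]) - C g) :
    (P.coeff 0).natDegree = P.natDegree := by
  -- `θ F = F(T, X T)`, so that the `T`-degree is the total degree
  let θ : ℚ[X][X] →+* ℚ[X][X] := eval₂RingHom (mapRingHom (C : ℚ →+* ℚ[X])) (C X * X)
  have hθ : ∀ F : ℚ[X][X], ∀ N i, ((θ F).coeff N).coeff i =
      if i ≤ N then (F.coeff i).coeff (N - i) else 0 := by
    intro F N i
    induction F using Polynomial.induction_on' with
    | add p q hp hq =>
      rw [map_add, coeff_add, coeff_add, hp, hq]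
      split_ifs <;> simp
    | monomial j a =>
      have : θ (monomial j a) = (a.map (C : ℚ →+* ℚ[X]) * C (X ^ j)) * X ^ j := by
        simp [θ, mul_pow, mul_assoc]
      rw [this, coeff_mul_X_pow', coeff_monomial]
      by_cases hj : j ≤ N
      · rw [if_pos hj, coeff_mul_C, coeff_map, coeff_C_mul_X_pow]
        by_cases hij : i = j
        · subst hij; simp [hj]
        · rw [if_neg hij, if_neg (Ne.symm hij)]; simp
      · rw [if_neg hj]
        by_cases hij : i = j
        · subst hij; simp [hj]
        · rw [if_neg (Ne.symm hij)]; simp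
  have hlow : ∀ F : ℚ[X][X], F.Monic → F.natDegree ≤ (θ F).natDegree := by
    intro F hF
    apply le_natDegree_of_ne_zero
    intro h0
    have := hθ F F.natDegree F.natDegree
    rw [h0] at this
    simp [hF.coeff_natDegree] at this
  have hθ0 : ∀ F : ℚ[X][X], F.Monic → θ F ≠ 0 := by
    intro F hF h0
    have := hθ F F.natDegree F.natDegree
    rw [h0] at this
    simp [hF.coeff_natDegree] at this
  have hup : (θ (P * R)).natDegree ≤ g.natDegree := by
    rw [h, natDegree_le_iff_coeff_eq_zero]
    intro N hN
    ext i
    rw [hθ, coeff_zero]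
    split_ifs with hi
    · rw [coeff_sub, coeff_map, coeff_C]
      split_ifs with hi0
      · subst hi0
        rw [coeff_sub, coeff_C, if_neg (by omega), Nat.sub_zero,
          coeff_eq_zero_of_natDegree_lt hN, sub_zero]
      · rw [sub_zero, coeff_C]
        split_ifs with h2
        · rw [coeff_eq_zero_of_natDegree_lt (by omega)]
        · rfl
    · rfl
  have hdeg : P.natDegree + R.natDegree = g.natDegree := by
    rw [← hP.natDegree_mul hR, h, natDegree_diff]
  rw [map_mul, natDegree_mul (hθ0 P hP) (hθ0 R hR)] at hup
  have h1 := hlow P hP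
  have h2 := hlow R hR
  have hcz : ∀ F : ℚ[X][X], (F.coeff 0).natDegree ≤ (θ F).natDegree := by
    intro F
    rw [natDegree_le_iff_coeff_eq_zero]
    intro N hN
    have := hθ F N 0
    rw [coeff_eq_zero_of_natDegree_lt hN] at this
    simpa using this.symm
  have h3 := hcz P
  have h4 := hcz R
  have hprod : P.coeff 0 * R.coeff 0 = C (g.coeff 0) - g := by
    rw [← mul_coeff_zero, h]; simp
  have hpd : (C (g.coeff 0) - g).natDegree = g.natDegree := by
    rw [natDegree_sub, natDegree_sub_C]
  have h5 : P.coeff 0 * R.coeff 0 ≠ 0 := by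
    intro h0; rw [hprod] at h0; rw [h0, natDegree_zero] at hpd; omega
  have h6 := natDegree_mul (left_ne_zero_of_mul h5) (right_ne_zero_of_mul h5)
  rw [hprod, hpd] at h6
  omega

section Block

variable {E : Type} [Field E] [Algebra (RatFunc ℚ) E]

/-- Evaluation of rational polynomials at a point of an extension of `ℚ(t)`. -/
noncomputable def evalAt (x : E) : ℚ[X] →+* E :=
  eval₂RingHom ((algebraMap (RatFunc ℚ) E).comp (algebraMap ℚ (RatFunc ℚ))) x

theorem evalAt_eq (x : E) {g : ℚ[X]} (hx : aeval x (genPoly g) = 0) :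
    evalAt x (-g) = algebraMap (RatFunc ℚ) E RatFunc.X := by
  rw [genPoly, map_add, aeval_C, aeval_def, eval₂_map] at hx
  rw [map_neg, neg_eq_iff_add_eq_zero, ← hx]
  rfl

theorem tau_eq (x : E) {g : ℚ[X]} (hx : aeval x (genPoly g) = 0) :
    (algebraMap (RatFunc ℚ) E).comp (algebraMap ℚ[X] (RatFunc ℚ)) =
      (evalAt x).comp (compRingHom (-g)) := by
  apply Polynomial.ringHom_ext'
  · exact Subsingleton.elim _ _
  · simp only [RingHom.comp_apply, RatFunc.algebraMap_X, coe_compRingHom_apply, X_comp]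
    rw [evalAt_eq x hx]

theorem evalAt_injective (x : E) {g : ℚ[X]} (hx : aeval x (genPoly g) = 0) :
    Function.Injective (evalAt x) := by
  let _ : Algebra ℚ E := ((algebraMap (RatFunc ℚ) E).comp (algebraMap ℚ (RatFunc ℚ))).toAlgebra
  rw [injective_iff_map_eq_zero]
  intro p hp
  by_contra hne
  have hx1 : IsAlgebraic ℚ x := ⟨p, hne, hp⟩
  have hx2 : IsIntegral ℚ x := hx1.isIntegral
  have h3 : IsIntegral ℚ (aeval x (-g)) := by
    have : aeval x (-g) = algebraMap (integralClosure ℚ E) E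
        (aeval (⟨x, hx2⟩ : integralClosure ℚ E) (-g)) := by
      rw [← aeval_algebraMap_apply]; rfl
    rw [this]
    exact (aeval (⟨x, hx2⟩ : integralClosure ℚ E) (-g)).2
  have h4 : aeval x (-g) = algebraMap (RatFunc ℚ) E RatFunc.X := evalAt_eq x hx
  rw [h4] at h3
  obtain ⟨q, hq, hq0⟩ := h3.isAlgebraic
  have h5 : algebraMap (RatFunc ℚ) E ((aeval (RatFunc.X : RatFunc ℚ)) q) = 0 := by
    rw [← hq0, aeval_def, hom_eval₂]; rfl
  rw [map_eq_zero] at h5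
  refine RatFunc.transcendental_X (K := ℚ) ⟨q, hq, ?_⟩
  refine Eq.trans ?_ h5
  change eval₂ _ _ q = eval₂ _ _ q
  congr 1
  exact Subsingleton.elim _ _

theorem descend [FiniteDimensional (RatFunc ℚ) E] [IsGalois (RatFunc ℚ) E]
    (x : E) {g : ℚ[X]} (hx : aeval x (genPoly g) = 0) (e : E)
    (hIntegral : ((algebraMap (RatFunc ℚ) E).comp (algebraMap ℚ[X] (RatFunc ℚ))).IsIntegralElem e)
    (hfix : ∀ σ : E ≃ₐ[RatFunc ℚ] E, σ x = x → σ e = e) : ∃ p, evalAt x p = e := by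
  have hinj := evalAt_injective x hx
  let ψ : RatFunc ℚ →+* E := IsFractionRing.lift hinj
  have hψ : ∀ p, ψ (algebraMap ℚ[X] (RatFunc ℚ) p) = evalAt x p :=
    fun p => IsFractionRing.lift_algebraMap hinj p
  have hτ := tau_eq x hx
  have halg : ∀ k, algebraMap (RatFunc ℚ) E k ∈ ψ.fieldRange := by
    intro k
    induction k using RatFunc.induction_on with
    | f p q hq =>
      rw [map_div₀]
      have h := fun p => RingHom.congr_fun hτ p
      simp only [RingHom.comp_apply] at h
      rw [h, h, ← hψ, ← hψ]
      exact div_mem ⟨_, rfl⟩ ⟨_, rfl⟩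
  let L : IntermediateField (RatFunc ℚ) E := ψ.fieldRange.toIntermediateField halg
  have hxL : x ∈ L := by
    refine ⟨algebraMap ℚ[X] (RatFunc ℚ) X, ?_⟩
    rw [hψ]; simp [evalAt]
  have hle : IntermediateField.adjoin (RatFunc ℚ) {x} ≤ L :=
    IntermediateField.adjoin_simple_le_iff.2 hxL
  have he : e ∈ IntermediateField.adjoin (RatFunc ℚ) {x} := by
    rw [← IsGalois.fixedField_fixingSubgroup (IntermediateField.adjoin (RatFunc ℚ) {x}),
      IntermediateField.mem_fixedField_iff]
    intro σ hσ
    apply hfix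
    rw [IntermediateField.mem_fixingSubgroup_iff] at hσ
    exact hσ x (IntermediateField.mem_adjoin_simple_self _ _)
  obtain ⟨ρ, hρ⟩ := hle he
  have hρ' : ψ ρ = e := hρ
  have hρint : IsIntegral ℚ[X] ρ := by
    obtain ⟨q, hq, hq0⟩ := hIntegral
    refine ⟨q.map (compRingHom (-g)), hq.map _, ?_⟩
    apply ψ.injective
    rw [map_zero, hom_eval₂, hρ', eval₂_map, ← hq0]
    congr 1
    rw [hτ]
    congr 1
    apply Polynomial.ringHom_ext'
    · exact Subsingleton.elim _ _
    · exact hψ X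
  obtain ⟨p, hp⟩ := IsIntegrallyClosed.isIntegral_iff.1 hρint
  exact ⟨p, by rw [← hψ, hp, hρ']⟩

theorem block_core [DecidableEq E] [FiniteDimensional (RatFunc ℚ) E] [IsGalois (RatFunc ℚ) E]
    {g : ℚ[X]} (hm : g.Monic) (hn : 0 < g.natDegree) (S B : Finset E)
    (hS : (genPoly g).map (algebraMap (RatFunc ℚ) E) = ∏ b ∈ S, (X - C b))
    (hBS : B ⊆ S) (x : E) (hxB : x ∈ B)
    (hB : ∀ σ : E ≃ₐ[RatFunc ℚ] E, σ x ∈ B → B.image σ = B)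
    (htr : ∀ b ∈ B, ∃ σ : E ≃ₐ[RatFunc ℚ] E, σ x = b) :
    ∃ u w : ℚ[X], g = u.comp w ∧ w.natDegree = B.card := by
  have hroot : ∀ b ∈ S, aeval b (genPoly g) = 0 := by
    intro b hb
    rw [aeval_def, ← eval_map, hS, eval_prod]
    exact Finset.prod_eq_zero hb (by simp)
  have hx := hroot x (hBS hxB)
  set τ := (algebraMap (RatFunc ℚ) E).comp (algebraMap ℚ[X] (RatFunc ℚ)) with hτ
  let _ : Algebra ℚ[X] E := τ.toAlgebra
  have hIntegral : ∀ b ∈ S, IsIntegral ℚ[X] b := by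
    intro b hb
    refine ⟨g.map (C : ℚ →+* ℚ[X]) + C X, ?_, ?_⟩
    · apply (hm.map _).add_of_left
      refine lt_of_le_of_lt degree_C_le ?_
      rw [degree_map_eq_of_injective C_injective, degree_eq_natDegree hm.ne_zero]
      exact_mod_cast hn
    · change eval₂ τ b _ = 0
      rw [← hroot b hb, genPoly, aeval_def, eval₂_add, eval₂_add, eval₂_map, eval₂_map, eval₂_C,
        eval₂_C, hτ, RingHom.comp_apply, RatFunc.algebraMap_X]
      congr 2
      exact Subsingleton.elim _ _
  set P : E[X] := ∏ b ∈ B, (X - C b) with hP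
  have hPm : P.Monic := monic_prod_of_monic _ _ (fun b _ => monic_X_sub_C b)
  have hPdeg : P.natDegree = B.card := by
    rw [hP, natDegree_prod_of_monic _ _ (fun b _ => monic_X_sub_C b)]; simp
  have hPint : ∀ i, IsIntegral ℚ[X] (P.coeff i) := by
    intro i
    have : P = (∏ b ∈ B.attach, (X - C (⟨b.1, hIntegral _ (hBS b.2)⟩ : integralClosure ℚ[X] E))).map
        (algebraMap (integralClosure ℚ[X] E) E) := by
      rw [Polynomial.map_prod, hP, ← Finset.prod_attach]
      refine Finset.prod_congr rfl fun b _ => ?_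
      rw [Polynomial.map_sub, map_X, map_C]
      rfl
    rw [this, coeff_map]
    exact Subtype.prop (p := fun e : E => e ∈ integralClosure ℚ[X] E) _
  have hPfix : ∀ σ : E ≃ₐ[RatFunc ℚ] E, σ x ∈ B → P.map (σ : E →+* E) = P := by
    intro σ hσ
    conv_rhs => rw [hP, ← hB σ hσ, Finset.prod_image (fun a _ b _ h => σ.injective h)]
    rw [hP, Polynomial.map_prod]
    refine Finset.prod_congr rfl fun b _ => ?_
    rw [Polynomial.map_sub, map_X, map_C]
    rfl
  have hPlift : P ∈ lifts (evalAt x) := by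
    rw [lifts_iff_coeff_lifts]
    intro i
    refine descend x hx _ (hPint i) fun σ hσ => ?_
    have := congrArg (fun p => coeff p i) (hPfix σ (by rw [hσ]; exact hxB))
    simpa [coeff_map] using this
  obtain ⟨Q, hQP, hQdeg, hQm⟩ := lifts_and_natDegree_eq_and_monic hPlift hPm
  have hinj := evalAt_injective x hx
  have hfac : (g.map (C : ℚ →+* ℚ[X]) - C g).map (evalAt x) = ∏ b ∈ S, (X - C b) := by
    rw [← hS, genPoly, Polynomial.map_sub, Polynomial.map_add, Polynomial.map_map,
      Polynomial.map_map, map_C, map_C, ← evalAt_eq x hx, map_neg, C_neg, sub_eq_add_neg]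
    congr 2
    exact Subsingleton.elim _ _
  have hPdvd : P ∣ (g.map (C : ℚ →+* ℚ[X]) - C g).map (evalAt x) := by
    rw [hfac]; exact Finset.prod_dvd_prod_of_subset _ _ _ hBS
  have hQdvd : Q ∣ (g.map (C : ℚ →+* ℚ[X]) - C g) := by
    rw [← map_dvd_map (evalAt x) hinj hQm, hQP]; exact hPdvd
  obtain ⟨R, hR⟩ := hQdvd
  have hRm : R.Monic := hQm.of_mul_monic_left (hR ▸ monic_diff hm hn)
  have hp0 := coeff_zero_natDegree g hn Q R hQm hRm hR.symm
  rw [hQdeg, hPdeg] at hp0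
  have hBpos : 0 < B.card := Finset.card_pos.2 ⟨x, hxB⟩
  set p0 := Q.coeff 0 with hp0def
  have hp0ne : p0 ≠ 0 := by intro h; rw [h, natDegree_zero] at hp0; omega
  set w : ℚ[X] := C (p0.leadingCoeff⁻¹) * p0 with hw
  have hlc : p0.leadingCoeff ≠ 0 := leadingCoeff_ne_zero.2 hp0ne
  have hwm : w.Monic := by
    rw [Monic, hw, leadingCoeff_mul, leadingCoeff_C, inv_mul_cancel₀ hlc]
  have hwdeg : w.natDegree = B.card := by
    rw [hw, natDegree_C_mul (inv_ne_zero hlc), hp0]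
  have hσev : ∀ (σ : E ≃ₐ[RatFunc ℚ] E) (p : ℚ[X]), σ (evalAt x p) = evalAt (σ x) p := by
    intro σ p
    change (σ : E →+* E) (eval₂ _ _ _) = eval₂ _ _ _
    rw [hom_eval₂]
    congr 1
    exact Subsingleton.elim _ _
  have hwB : ∀ b ∈ B, evalAt b w = evalAt x w := by
    intro b hb
    obtain ⟨σ, rfl⟩ := htr b hb
    rw [← hσev]
    have h1 : evalAt x p0 = P.coeff 0 := by rw [← hQP, coeff_map]
    have h2 := congrArg (fun p => coeff p 0) (hPfix σ hb)
    simp only [coeff_map] at h2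
    have h3 : σ (evalAt x p0) = evalAt x p0 := by rw [h1]; exact h2
    rw [hw, map_mul, map_mul, h3]
    congr 1
    simp [evalAt]
  have hWm : ((w.map (C : ℚ →+* ℚ[X]) - C w).map (evalAt x)).Monic :=
    (monic_diff hwm (by omega)).map _
  have hWdeg : ((w.map (C : ℚ →+* ℚ[X]) - C w).map (evalAt x)).natDegree = B.card := by
    rw [(monic_diff hwm (by omega)).natDegree_map, natDegree_diff, hwdeg]
  have hWdvd : P ∣ (w.map (C : ℚ →+* ℚ[X]) - C w).map (evalAt x) := by
    rw [hP]
    apply Finset.prod_dvd_of_coprime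
    · intro a _ b _ hab
      exact pairwise_coprime_X_sub_C (s := id) Function.injective_id hab
    · intro b hb
      rw [dvd_iff_isRoot, IsRoot.def, Polynomial.map_sub, map_C, eval_sub, eval_C, sub_eq_zero,
        ← hwB b hb, Polynomial.map_map, eval_map]
      change _ = eval₂ _ _ _
      congr 1
      exact Subsingleton.elim _ _
  have hWP : P = (w.map (C : ℚ →+* ℚ[X]) - C w).map (evalAt x) :=
    (eq_of_monic_of_dvd_of_natDegree_le hPm hWm hWdvd (by rw [hWdeg, hPdeg])).symm
  rw [hWP] at hPdvd
  rw [map_dvd_map (evalAt x) hinj (monic_diff hwm (by omega))] at hPdvd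
  obtain ⟨u, hu⟩ := exists_comp_of_dvd w hwm (by omega) g.natDegree g le_rfl hPdvd
  exact ⟨u, w, hu, hwdeg⟩

end Block

theorem genPoly_preprimitive {g : ℚ[X]} (hm : g.Monic) (hn : 0 < g.natDegree)
    (hindec : ∀ u w : ℚ[X], g = u.comp w → 2 ≤ w.natDegree → 2 ≤ u.natDegree → False) :
    MulAction.IsPreprimitive (genPoly g).Gal
      ((genPoly g).rootSet (genPoly g).SplittingField) := by
  classical
  have hirr := genPoly_irreducible hm hn
  have hfm := genPoly_monic hm hn
  set f := genPoly g with hf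
  have hsep : f.Separable := hirr.separable
  have : IsGalois (RatFunc ℚ) f.SplittingField := IsGalois.of_separable_splitting_field hsep
  have htrans : MulAction.IsPretransitive f.Gal (f.rootSet f.SplittingField) := by
    refine ⟨fun x y => ?_⟩
    have hx := minpoly.eq_of_irreducible hirr (mem_rootSet.mp x.2).2
    have hy := minpoly.eq_of_irreducible hirr (mem_rootSet.mp y.2).2
    obtain ⟨σ, hσ⟩ := (Normal.minpoly_eq_iff_mem_orbit _).mp (hy.symm.trans hx)
    exact ⟨σ, Subtype.ext hσ⟩
  have hSfin : (f.map (algebraMap (RatFunc ℚ) f.SplittingField)).roots.Nodup :=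
    nodup_roots hsep.map
  have hSprod : f.map (algebraMap (RatFunc ℚ) f.SplittingField) =
      ∏ b ∈ (f.map (algebraMap (RatFunc ℚ) f.SplittingField)).roots.toFinset, (X - C b) := by
    have h1 := (SplittingField.splits f).eq_prod_roots_of_monic (hfm.map _)
    conv_lhs => rw [h1]
    rw [Finset.prod, Multiset.toFinset_val, hSfin.dedup]
  have hScard : (f.map (algebraMap (RatFunc ℚ) f.SplittingField)).roots.toFinset.card =
      g.natDegree := by
    have h2 := congrArg natDegree hSprod
    rw [natDegree_prod_of_monic _ _ (fun b _ => monic_X_sub_C b)] at h2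
    simp only [natDegree_X_sub_C, Finset.sum_const, smul_eq_mul, mul_one] at h2
    rw [← h2, hfm.natDegree_map, hf, genPoly_natDegree]
  set S := (f.map (algebraMap (RatFunc ℚ) f.SplittingField)).roots.toFinset with hSdef
  have hSmem : ∀ b, b ∈ S ↔ b ∈ f.rootSet f.SplittingField := by
    intro b
    simp [hSdef, rootSet, aroots]
  refine MulAction.IsPreprimitive.mk (fun {B} hB => ?_)
  by_contra hcon
  rw [MulAction.IsTrivialBlock, not_or] at hcon
  obtain ⟨hns, hnu⟩ := hcon
  have hnt := Set.not_subsingleton_iff.1 hns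
  obtain ⟨x, hx, y, hy, hxy⟩ := hnt
  let B' : Finset f.SplittingField := B.toFinset.image Subtype.val
  have hB'mem : ∀ b : f.rootSet f.SplittingField, (b : f.SplittingField) ∈ B' ↔ b ∈ B := by
    intro b
    simp [B']
  have hB'S : B' ⊆ S := by
    intro b hb
    obtain ⟨c, -, rfl⟩ := Finset.mem_image.1 hb
    exact (hSmem _).2 c.2
  obtain ⟨u, w, hg, hw⟩ := block_core hm hn S B' hSprod hB'S x ((hB'mem x).2 hx) (by
      intro σ hσ
      have h1 : (show f.Gal from σ) • x ∈ B := by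
        rw [← hB'mem]; exact hσ
      have h2 := hB.smul_eq_of_mem hx h1
      ext e
      constructor
      · intro he
        obtain ⟨b, hb, rfl⟩ := Finset.mem_image.1 he
        obtain ⟨c, hc, rfl⟩ := Finset.mem_image.1 hb
        have h3 : (show f.Gal from σ) • c ∈ B := by
          rw [← h2]; exact Set.smul_mem_smul_set (Set.mem_toFinset.1 hc)
        exact (hB'mem _).2 h3
      · intro he
        obtain ⟨b, hb, rfl⟩ := Finset.mem_image.1 he
        have hb' := Set.mem_toFinset.1 hb
        rw [← h2] at hb'
        obtain ⟨c, hc, rfl⟩ := hb'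
        exact Finset.mem_image.2 ⟨c, (hB'mem _).2 hc, rfl⟩) (by
      intro b hb
      obtain ⟨c, hc, rfl⟩ := Finset.mem_image.1 hb
      obtain ⟨σ, hσ⟩ := MulAction.exists_smul_eq f.Gal x c
      exact ⟨σ, congrArg Subtype.val hσ⟩)
  have hcard2 : 2 ≤ B'.card := by
    apply Finset.one_lt_card.2
    exact ⟨x, (hB'mem x).2 hx, y, (hB'mem y).2 hy, fun h => hxy (Subtype.ext h)⟩
  have hlt : B'.card < g.natDegree := by
    rw [← hScard]
    refine Finset.card_lt_card ⟨hB'S, fun h => hnu ?_⟩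
    ext b
    simp only [Set.mem_univ, iff_true]
    rw [← hB'mem]
    exact h ((hSmem _).2 b.2)
  refine hindec u w hg (by omega) ?_
  have h5 := congrArg natDegree hg
  rw [natDegree_comp, hw] at h5
  by_contra hu
  have : u.natDegree = 0 ∨ u.natDegree = 1 := by omega
  rcases this with h | h <;> rw [h] at h5 <;> omega

theorem exists_nonzero_critical {g : ℂ[X]} (hm : g.Monic) {s : ℕ} (hs0 : 0 < s)
    (hsn : s < g.natDegree) (hs : g.coeff s ≠ 0) : ∃ c, c ≠ 0 ∧ g.derivative.eval c = 0 := by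
  by_contra hcon
  push Not at hcon
  have h1 : g.derivative.coeff (s - 1) ≠ 0 := by
    rw [coeff_derivative, Nat.sub_add_cancel hs0]
    exact mul_ne_zero hs (by norm_cast)
  have h2 : g.derivative.coeff (g.natDegree - 1) ≠ 0 := by
    rw [coeff_derivative, Nat.sub_add_cancel (by omega), coeff_natDegree, hm.leadingCoeff]
    exact mul_ne_zero one_ne_zero (by norm_cast)
  have hne : g.derivative ≠ 0 := by
    intro h; rw [h] at h1; simp at h1
  have hr : ∀ b ∈ g.derivative.roots, b = 0 := by
    intro b hb
    by_contra hb0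
    exact hcon b hb0 ((mem_roots hne).1 hb)
  have h3 := Multiset.eq_replicate_card.2 hr
  have h4 := (IsAlgClosed.splits g.derivative).eq_prod_roots
  rw [h3] at h4
  simp only [Multiset.map_replicate, Multiset.prod_replicate, C_0, sub_zero] at h4
  rw [h4, coeff_C_mul_X_pow] at h1 h2
  have h5 := (ite_ne_right_iff.1 h1).1
  have h6 := (ite_ne_right_iff.1 h2).1
  omega

theorem gal_of_star {g : ℚ[X]} (hm : g.Monic) {s : ℕ} (hs0 : 0 < s)
    (hsn : s < g.natDegree) (hco : Nat.Coprime g.natDegree s) (hs : g.coeff s ≠ 0)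
    (hstar : StarCond (g.map (algebraMap ℚ ℂ))) :
    Nonempty ((genPoly g).Gal ≃* Equiv.Perm (Fin g.natDegree)) := by
  have hdeg : (g.map (algebraMap ℚ ℂ)).natDegree = g.natDegree := hm.natDegree_map _
  have hs' : (g.map (algebraMap ℚ ℂ)).coeff s ≠ 0 := by
    rw [coeff_map]; exact (_root_.map_ne_zero _).2 hs
  obtain ⟨c, hc0, hc⟩ := exists_nonzero_critical (hm.map (algebraMap ℚ ℂ)) hs0
    (by rw [hdeg]; exact hsn) hs'
  refine gal_of_preprimitive g hm c hc (hstar c hc0 hc).1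
    (fun d hd h h' => (hstar c hc0 hc).2 d hd h' h) ?_
  refine genPoly_preprimitive hm (by omega) fun u w h hw hu => ?_
  refine indecomposable_of_star (s := s) hstar (by rw [hdeg]; exact hco) hs'
    (u := u.map (algebraMap ℚ ℂ)) (w := w.map (algebraMap ℚ ℂ)) ?_ ?_ ?_
  · rw [← Polynomial.map_comp, ← h]
  · rwa [natDegree_map]
  · rwa [natDegree_map]

theorem natDegree_det_le_of_entries {ι : Type*} [Fintype ι] [DecidableEq ι]
    (M : Matrix ι ι ℂ[X]) (N : ℕ) (h : ∀ i j, (M i j).natDegree ≤ N) :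
    M.det.natDegree ≤ Fintype.card ι * N := by
  rw [Matrix.det_apply]
  refine natDegree_sum_le_of_forall_le _ _ fun σ _ => ?_
  refine (natDegree_smul_le _ _).trans ?_
  refine (natDegree_prod_le _ _).trans ?_
  refine (Finset.sum_le_sum fun i _ => h (σ i) i).trans ?_
  simp

theorem res_elim (A V : ℂ[X][X]) (m k N : ℕ) (hA : A.natDegree ≤ m) (hV : V.natDegree ≤ k)
    (α β : ℂ) (hα : α ≠ 0) (hβ : β ≠ 0) (hAm : A.coeff m = C α) (hVk : V.coeff k = C β)
    (hAN : ∀ i, (A.coeff i).natDegree ≤ N) (hVN : ∀ i, (V.coeff i).natDegree ≤ N)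
    (hcop : ∀ y, (A.map (evalRingHom 0)).eval y = 0 → (V.map (evalRingHom 0)).eval y = 0 → False) :
    ∃ E : ℂ[X], E ≠ 0 ∧ E.natDegree ≤ (m + k) * N ∧
      ∀ z y, (A.map (evalRingHom z)).eval y = 0 → (V.map (evalRingHom z)).eval y = 0 →
        E.eval z = 0 := by
  have key : ∀ z, (resultant A V m k).eval z =
      resultant (A.map (evalRingHom z)) (V.map (evalRingHom z)) := by
    intro z
    have h1 : (A.map (evalRingHom z)).natDegree = m := by
      refine natDegree_eq_of_le_of_coeff_ne_zero (natDegree_map_le.trans hA) ?_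
      rw [coeff_map, hAm]; simpa using hα
    have h2 : (V.map (evalRingHom z)).natDegree = k := by
      refine natDegree_eq_of_le_of_coeff_ne_zero (natDegree_map_le.trans hV) ?_
      rw [coeff_map, hVk]; simpa using hβ
    rw [h1, h2, resultant_map_map]; rfl
  refine ⟨resultant A V m k, ?_, ?_, ?_⟩
  · intro h0
    have h1 := key 0
    rw [h0, eval_zero] at h1
    have h2 := (resultant_eq_zero_iff.1 h1.symm).2
    rw [isCoprime_iff_aeval_ne_zero_of_isAlgClosed ℂ ℂ] at h2
    push Not at h2
    obtain ⟨y, hy1, hy2⟩ := h2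
    exact hcop y (by simpa using hy1) (by simpa using hy2)
  · refine (natDegree_det_le_of_entries _ N fun i j => ?_).trans (by simp)
    induction j using Fin.addCases <;> simp only [sylvester, Matrix.of_apply, Fin.addCases_left,
      Fin.addCases_right] <;> split_ifs <;> first | exact hAN _ | exact hVN _ | simp
  · intro z y h1 h2
    rw [key, resultant_eq_zero_iff]
    constructor
    · left
      intro h
      have := congrArg (fun p => coeff p m) h
      simp only [coeff_map, hAm, coeff_zero] at this
      exact hα (by simpa using this)
    · rw [isCoprime_iff_aeval_ne_zero_of_isAlgClosed ℂ ℂ]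
      push Not
      exact ⟨y, by simpa using h1, by simpa using h2⟩

/-- A bivariate polynomial in `z` (inner variable) and `y` (outer variable). -/
noncomputable def biv (n : ℕ) (e : ℕ → ℂ) (k : ℕ → ℂ[X]) : ℂ[X][X] :=
  ∑ j ∈ Finset.Icc 1 n, C (C (e j) * X ^ (n - j)) * (k j).map C

theorem biv_coeff (n : ℕ) (e : ℕ → ℂ) (k : ℕ → ℂ[X]) (i : ℕ) :
    (biv n e k).coeff i =
      ∑ j ∈ Finset.Icc 1 n, C (e j) * X ^ (n - j) * C ((k j).coeff i) := by
  rw [biv, finsetSum_coeff]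
  refine Finset.sum_congr rfl fun j _ => ?_
  rw [coeff_C_mul, coeff_map]

theorem biv_coeff_natDegree (n : ℕ) (e : ℕ → ℂ) (k : ℕ → ℂ[X]) (i : ℕ) :
    ((biv n e k).coeff i).natDegree ≤ n - 1 := by
  rw [biv_coeff]
  refine natDegree_sum_le_of_forall_le _ _ fun j hj => ?_
  rw [Finset.mem_Icc] at hj
  refine natDegree_mul_C_le _ _ |>.trans ?_
  refine (natDegree_C_mul_X_pow_le _ _).trans (by omega)

theorem biv_eval (n : ℕ) (e : ℕ → ℂ) (k : ℕ → ℂ[X]) (z y : ℂ) :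
    ((biv n e k).map (evalRingHom z)).eval y =
      ∑ j ∈ Finset.Icc 1 n, e j * z ^ (n - j) * (k j).eval y := by
  simp only [biv, Polynomial.map_sum, Polynomial.map_mul, eval_finsetSum, eval_mul, map_C,
    Polynomial.map_map]
  refine Finset.sum_congr rfl fun j _ => ?_
  have : (evalRingHom z).comp (C : ℂ →+* ℂ[X]) = RingHom.id ℂ := by ext; simp
  rw [this, map_id]
  simp

/-- The geometric sum polynomial. -/
noncomputable def geo (k : ℕ) : ℂ[X] := ∑ i ∈ Finset.range k, X ^ i

theorem geo_coeff (k i : ℕ) : (geo k).coeff i = if i < k then 1 else 0 := by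
  simp [geo, finsetSum_coeff, coeff_X_pow]

theorem geo_eval (k : ℕ) (y : ℂ) : (y - 1) * (geo k).eval y = y ^ k - 1 := by
  rw [geo, eval_finsetSum]
  simp only [eval_pow, eval_X]
  rw [mul_comm, geom_sum_mul]

theorem pair_elim (n s : ℕ) (hs0 : 0 < s) (hsn : s < n) (hco : Nat.Coprime n s)
    (h : ℕ → ℂ) (hn : h n = 1) :
    ∃ E : ℂ[X], E ≠ 0 ∧ E.natDegree ≤ (2 * n - 3) * (n - 1) ∧
      ∀ c d : ℂ, c ≠ 0 → d ≠ 0 → c ≠ d →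
        ∑ j ∈ Finset.Icc 1 n, ((s : ℂ) - j) * h j * d ^ j =
          ∑ j ∈ Finset.Icc 1 n, ((s : ℂ) - j) * h j * c ^ j →
        (∑ j ∈ Finset.Icc 1 n, (j : ℂ) * h j * d ^ (j - 1)) * c ^ (s - 1) =
          (∑ j ∈ Finset.Icc 1 n, (j : ℂ) * h j * c ^ (j - 1)) * d ^ (s - 1) →
        E.eval c⁻¹ = 0 := by
  have hn0 : (n : ℂ) ≠ 0 := by norm_cast; omega
  have hsn' : (s : ℂ) - n ≠ 0 := by
    rw [sub_ne_zero]; norm_cast; omega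
  have hnmem : n ∈ Finset.Icc 1 n := by rw [Finset.mem_Icc]; omega
  obtain ⟨E, hE0, hEd, hE⟩ := res_elim
    (biv n (fun j => (j : ℂ) * h j) (fun j => geo (j - 1) - geo (s - 1)))
    (biv n (fun j => ((s : ℂ) - j) * h j) geo) (n - 2) (n - 1) (n - 1)
    (by
      rw [natDegree_le_iff_coeff_eq_zero]
      intro i hi
      rw [biv_coeff]
      refine Finset.sum_eq_zero fun j hj => ?_
      rw [Finset.mem_Icc] at hj
      rw [coeff_sub, geo_coeff, geo_coeff, if_neg (by omega), if_neg (by omega)]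
      simp)
    (by
      rw [natDegree_le_iff_coeff_eq_zero]
      intro i hi
      rw [biv_coeff]
      refine Finset.sum_eq_zero fun j hj => ?_
      rw [Finset.mem_Icc] at hj
      rw [geo_coeff, if_neg (by omega)]
      simp)
    n ((s : ℂ) - n) hn0 hsn'
    (by
      rw [biv_coeff, Finset.sum_eq_single_of_mem n hnmem]
      · rw [coeff_sub, geo_coeff, geo_coeff, if_pos (by omega), if_neg (by omega)]
        simp [hn]
      · intro j hj hjn
        rw [Finset.mem_Icc] at hj
        rw [coeff_sub, geo_coeff, geo_coeff, if_neg (by omega), if_neg (by omega)]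
        simp)
    (by
      rw [biv_coeff, Finset.sum_eq_single_of_mem n hnmem]
      · rw [geo_coeff, if_pos (by omega)]
        simp [hn]
      · intro j hj hjn
        rw [Finset.mem_Icc] at hj
        rw [geo_coeff, if_neg (by omega)]
        simp)
    (biv_coeff_natDegree _ _ _) (biv_coeff_natDegree _ _ _)
    (by
      intro y h1 h2
      rw [biv_eval, Finset.sum_eq_single_of_mem n hnmem] at h1 h2
      · simp only [hn, mul_one, Nat.sub_self, pow_zero, mul_eq_zero, hn0, hsn', false_or] at h1 h2
        have e1 := geo_eval n y
        rw [h2, mul_zero] at e1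
        have e2 := geo_eval (n - 1) y
        have e3 := geo_eval (s - 1) y
        rw [eval_sub, sub_eq_zero] at h1
        rw [h1, e3] at e2
        have e4 : y ^ n = 1 := by linear_combination -e1
        have e5 : y ^ s = 1 := by
          have : y ^ (s - 1) * y = y ^ (n - 1) * y := by linear_combination y * e2
          rwa [← pow_succ, ← pow_succ, Nat.sub_add_cancel hs0, Nat.sub_add_cancel (by omega),
            e4] at this
        have e6 : y = 1 := by
          have := pow_gcd_eq_one.2 ⟨e4, e5⟩
          rwa [hco, pow_one] at this
        rw [e6, geo, eval_finsetSum] at h2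
        simp at h2
        omega
      · intro j hj hjn
        rw [Finset.mem_Icc] at hj
        rw [zero_pow (by omega)]; simp
      · intro j hj hjn
        rw [Finset.mem_Icc] at hj
        rw [zero_pow (by omega)]; simp)
  refine ⟨E, hE0, hEd.trans (le_of_eq (by congr 1; omega)), ?_⟩
  intro c d hc hd hcd hV hA
  have hy1 : d / c - 1 ≠ 0 := by
    rw [sub_ne_zero, Ne, div_eq_one_iff_eq hc]; exact hcd.symm
  have hcn : c ^ n ≠ 0 := pow_ne_zero _ hc
  have hz : ∀ j ∈ Finset.Icc 1 n, c ^ n * c⁻¹ ^ (n - j) = c ^ j := by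
    intro j hj
    rw [Finset.mem_Icc] at hj
    have : c ^ n = c ^ j * c ^ (n - j) := by rw [← pow_add]; congr 1; omega
    rw [this, inv_pow, mul_assoc, mul_inv_cancel₀ (pow_ne_zero _ hc), mul_one]
  refine hE c⁻¹ (d / c) ?_ ?_
  · rw [biv_eval]
    have : c ^ n * (d / c - 1) * ∑ j ∈ Finset.Icc 1 n, (j : ℂ) * h j * c⁻¹ ^ (n - j) *
        (geo (j - 1) - geo (s - 1)).eval (d / c) =
        c * ((∑ j ∈ Finset.Icc 1 n, (j : ℂ) * h j * d ^ (j - 1)) -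
          (∑ j ∈ Finset.Icc 1 n, (j : ℂ) * h j * c ^ (j - 1)) * (d / c) ^ (s - 1)) := by
      rw [Finset.sum_mul, ← Finset.sum_sub_distrib, Finset.mul_sum, Finset.mul_sum]
      refine Finset.sum_congr rfl fun j hj => ?_
      have e1 := hz j hj
      have e2 := geo_eval (j - 1) (d / c)
      have e3 := geo_eval (s - 1) (d / c)
      rw [Finset.mem_Icc] at hj
      have e4 : c ^ j = c ^ (j - 1) * c := by rw [← pow_succ]; congr 1; omega
      have e5 : c ^ (j - 1) * (d / c) ^ (j - 1) = d ^ (j - 1) := by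
        rw [← mul_pow, mul_div_cancel₀ _ hc]
      rw [eval_sub]
      calc _ = (j : ℂ) * h j * (c ^ n * c⁻¹ ^ (n - j)) * ((d / c - 1) * (geo (j - 1)).eval (d / c) -
              (d / c - 1) * (geo (s - 1)).eval (d / c)) := by ring
        _ = _ := by
          rw [e1, e2, e3, e4]
          linear_combination (j : ℂ) * h j * c * e5
    have h0 : (∑ j ∈ Finset.Icc 1 n, (j : ℂ) * h j * d ^ (j - 1)) -
          (∑ j ∈ Finset.Icc 1 n, (j : ℂ) * h j * c ^ (j - 1)) * (d / c) ^ (s - 1) = 0 := by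
      have hcs : c ^ (s - 1) ≠ 0 := pow_ne_zero _ hc
      rw [sub_eq_zero, div_pow, ← mul_div_assoc, eq_div_iff hcs]
      exact hA
    rw [h0, mul_zero] at this
    exact (mul_eq_zero.1 this).resolve_left (mul_ne_zero hcn hy1)
  · rw [biv_eval]
    have : c ^ n * (d / c - 1) * ∑ j ∈ Finset.Icc 1 n, ((s : ℂ) - j) * h j * c⁻¹ ^ (n - j) *
        (geo j).eval (d / c) =
        (∑ j ∈ Finset.Icc 1 n, ((s : ℂ) - j) * h j * d ^ j) -
          ∑ j ∈ Finset.Icc 1 n, ((s : ℂ) - j) * h j * c ^ j := by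
      rw [Finset.mul_sum, ← Finset.sum_sub_distrib]
      refine Finset.sum_congr rfl fun j hj => ?_
      have e1 := hz j hj
      have e2 := geo_eval j (d / c)
      have e5 : c ^ j * (d / c) ^ j = d ^ j := by
        rw [← mul_pow, mul_div_cancel₀ _ hc]
      calc _ = ((s : ℂ) - j) * h j * (c ^ n * c⁻¹ ^ (n - j)) *
              ((d / c - 1) * (geo j).eval (d / c)) := by ring
        _ = _ := by
          rw [e1, e2]
          linear_combination ((s : ℂ) - j) * h j * e5
    rw [hV, sub_self] at this
    exact (mul_eq_zero.1 this).resolve_left (mul_ne_zero hcn hy1)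

theorem eval_Icc {n : ℕ} {q : ℂ[X]} (hd : q.natDegree = n) (h0 : q.coeff 0 = 0) (c : ℂ) :
    q.eval c = ∑ j ∈ Finset.Icc 1 n, q.coeff j * c ^ j := by
  rw [eval_eq_sum_range, hd, Finset.range_eq_Ico, Finset.sum_eq_sum_Ico_succ_bot (by omega), h0,
    zero_mul, zero_add]
  rfl

theorem eval_derivative_Icc {n : ℕ} {q : ℂ[X]} (hd : q.natDegree = n) (c : ℂ) :
    q.derivative.eval c = ∑ j ∈ Finset.Icc 1 n, (j : ℂ) * q.coeff j * c ^ (j - 1) := by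
  rw [derivative_eval, sum_over_range _ (by simp), hd, Finset.range_eq_Ico,
    Finset.sum_eq_sum_Ico_succ_bot (by omega)]
  simp only [CharP.cast_eq_zero, mul_zero, zero_mul, zero_add]
  refine Finset.sum_congr rfl fun j _ => ?_
  ring

theorem star_count (n s : ℕ) (hs0 : 0 < s) (hsn : s < n) (hco : Nat.Coprime n s)
    (q : ℂ[X]) (hq : q.Monic) (hd : q.natDegree = n) (h0 : q.coeff 0 = 0) :
    ∃ F : Finset ℂ, F.card ≤ n ^ 2 + n ∧ ∀ a, a ∉ F → a ≠ 0 ∧ StarCond (q + C a * X ^ s) := by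
  classical
  have hsC : (s : ℂ) ≠ 0 := by norm_cast; omega
  have hn0 : (n : ℂ) ≠ 0 := by norm_cast; omega
  have hsn' : (s : ℂ) - n ≠ 0 := by
    rw [sub_ne_zero]; norm_cast; omega
  have hqn : q.coeff n = 1 := by rw [← hd]; exact hq
  obtain ⟨E, hE0, hEd, hE⟩ := pair_elim n s hs0 hsn hco q.coeff hqn
  set V : ℂ[X] := C (s : ℂ) * q - X * q.derivative with hV
  set D : ℂ[X] := C ((s : ℂ) - 1) * q.derivative - X * q.derivative.derivative with hD
  have hq' : q.derivative.natDegree ≤ n - 1 := hd ▸ natDegree_derivative_le q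
  have hq'' : q.derivative.derivative.natDegree ≤ n - 1 - 1 :=
    (natDegree_derivative_le _).trans (by omega)
  have hV0 : V ≠ 0 := by
    intro h
    have h1 := congrArg (fun p => coeff p n) h
    obtain ⟨m, rfl⟩ : ∃ m, n = m + 1 := ⟨n - 1, by omega⟩
    simp only [hV, coeff_sub, coeff_C_mul, coeff_X_mul, coeff_derivative, hqn, coeff_zero] at h1
    apply hsn'
    push_cast
    linear_combination h1
  have hVd : V.natDegree ≤ n := by
    refine (natDegree_sub_le_of_le (n := n) ((natDegree_C_mul_le _ _).trans hd.le) ?_).trans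
      (max_self n).le
    refine natDegree_mul_le.trans ?_
    rw [natDegree_X]; omega
  have hDd : D.natDegree ≤ n - 1 := by
    by_cases hn2 : q.derivative.derivative = 0
    · rw [hD, hn2, mul_zero, sub_zero]
      exact (natDegree_C_mul_le _ _).trans hq'
    · have h1 : q.derivative.natDegree ≠ 0 := by
        intro h
        rw [eq_C_of_natDegree_eq_zero h] at hn2
        simp at hn2
      refine (natDegree_sub_le_of_le (n := n - 1) ((natDegree_C_mul_le _ _).trans hq') ?_).trans
        (max_self (n - 1)).le
      refine natDegree_mul_le.trans ?_
      rw [natDegree_X]; omega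
  have hD0 : D ≠ 0 := by
    intro h
    have h1 := congrArg (fun p => coeff p (n - 1)) h
    obtain ⟨m, rfl⟩ : ∃ m, n = m + 2 := ⟨n - 2, by omega⟩
    simp only [hD, show m + 2 - 1 = m + 1 from rfl, coeff_sub, coeff_C_mul, coeff_X_mul,
      coeff_derivative, hqn, coeff_zero, add_assoc, Nat.reduceAdd] at h1
    apply mul_ne_zero hn0 hsn'
    push_cast at h1 ⊢
    linear_combination h1
  let α : ℂ → ℂ := fun c => - q.derivative.eval c / (s * c ^ (s - 1))
  let T := E.roots.toFinset
  let β : ℂ → ℂ := fun z => α z⁻¹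
  let P := (T.image β).filter (fun a => 2 ≤ (T.filter (fun z => β z = a)).card)
  have hP : 2 * P.card ≤ (2 * n - 3) * (n - 1) := by
    calc 2 * P.card = ∑ a ∈ P, 2 := by simp [mul_comm]
      _ ≤ ∑ a ∈ P, (T.filter (fun z => β z = a)).card :=
        Finset.sum_le_sum fun a ha => (Finset.mem_filter.1 ha).2
      _ ≤ ∑ a ∈ T.image β, (T.filter (fun z => β z = a)).card :=
        Finset.sum_le_sum_of_subset (Finset.filter_subset _ _)
      _ = T.card := (Finset.card_eq_sum_card_image β T).symm
      _ ≤ E.natDegree := (Multiset.toFinset_card_le _).trans (card_roots' _)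
      _ ≤ _ := hEd
  refine ⟨{0} ∪ (D.roots.toFinset.image α ∪ (V.roots.toFinset.image α ∪ P)), ?_, ?_⟩
  · have c1 : (D.roots.toFinset.image α).card ≤ n - 1 := Finset.card_image_le.trans
      ((Multiset.toFinset_card_le _).trans ((card_roots' _).trans hDd))
    have c2 : (V.roots.toFinset.image α).card ≤ n := Finset.card_image_le.trans
      ((Multiset.toFinset_card_le _).trans ((card_roots' _).trans hVd))
    have c3 := Finset.card_union_le ({0} : Finset ℂ)
      (D.roots.toFinset.image α ∪ (V.roots.toFinset.image α ∪ P))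
    have c4 := Finset.card_union_le (D.roots.toFinset.image α) (V.roots.toFinset.image α ∪ P)
    have c5 := Finset.card_union_le (V.roots.toFinset.image α) P
    rw [Finset.card_singleton] at c3
    obtain ⟨m, rfl⟩ : ∃ m, n = m + 2 := ⟨n - 2, by omega⟩
    have e1 : 2 * (m + 2) - 3 = 2 * m + 1 := by omega
    have e2 : m + 2 - 1 = m + 1 := by omega
    rw [e1, e2] at hP
    rw [e2] at c1
    nlinarith
  · intro a ha
    simp only [Finset.mem_union, Finset.mem_singleton, not_or] at ha
    obtain ⟨ha0, haD, haV, haP⟩ := ha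
    refine ⟨ha0, ?_⟩
    -- critical points
    have hcrit : ∀ c : ℂ, (q + C a * X ^ s).derivative.eval c = 0 →
        q.derivative.eval c = - (s * a * c ^ (s - 1)) := by
      intro c hc
      simp only [derivative_add, derivative_C_mul, derivative_X_pow, eval_add, eval_mul, eval_C,
        eval_pow, eval_X] at hc
      linear_combination hc
    have hα : ∀ c : ℂ, c ≠ 0 → (q + C a * X ^ s).derivative.eval c = 0 → α c = a := by
      intro c hc0 hc
      have hcs : c ^ (s - 1) ≠ 0 := pow_ne_zero _ hc0
      change - q.derivative.eval c / (s * c ^ (s - 1)) = a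
      rw [hcrit c hc]
      field_simp
    have hval : ∀ c : ℂ, (q + C a * X ^ s).derivative.eval c = 0 →
        s * (q + C a * X ^ s).eval c = V.eval c := by
      intro c hc
      have h1 := hcrit c hc
      have h2 : c ^ s = c ^ (s - 1) * c := by rw [← pow_succ]; congr 1; omega
      simp only [hV, eval_sub, eval_mul, eval_C, eval_X, eval_add, eval_pow, h1, h2]
      ring
    have hVe : ∀ c : ℂ, V.eval c = ∑ j ∈ Finset.Icc 1 n, ((s : ℂ) - j) * q.coeff j * c ^ j := by
      intro c
      simp only [hV, eval_sub, eval_mul, eval_C, eval_X]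
      rw [eval_Icc hd h0, eval_derivative_Icc hd, Finset.mul_sum, Finset.mul_sum,
        ← Finset.sum_sub_distrib]
      refine Finset.sum_congr rfl fun j hj => ?_
      have h2 : c ^ j = c ^ (j - 1) * c := by
        rw [← pow_succ]; congr 1; rw [Finset.mem_Icc] at hj; omega
      rw [h2]; ring
    intro c hc0 hc
    constructor
    · intro hc2
      apply haD
      refine Finset.mem_image.2 ⟨c, ?_, hα c hc0 hc⟩
      rw [Multiset.mem_toFinset, mem_roots hD0, IsRoot.def]
      have h1 := hcrit c hc
      have h2 : q.derivative.derivative.eval c * c = - (s * (s - 1) * a * c ^ (s - 1)) := by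
        simp only [derivative_add, derivative_C_mul, derivative_X_pow, eval_add, eval_mul, eval_C,
          eval_pow, eval_X, map_natCast, derivative_natCast_mul, eval_natCast] at hc2
        obtain ⟨k, rfl⟩ : ∃ k, s = k + 1 := ⟨s - 1, by omega⟩
        rcases k with _ | k
        · simp at hc2 ⊢
          left; exact hc2
        · simp only [Nat.add_sub_cancel] at hc2 ⊢
          push_cast at hc2 ⊢
          linear_combination c * hc2
      simp only [hD, eval_sub, eval_mul, eval_C, eval_X]
      linear_combination (s - 1 : ℂ) * h1 - h2
    · intro d hdc hdcrit hdv
      by_cases hd0 : d = 0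
      · apply haV
        refine Finset.mem_image.2 ⟨c, ?_, hα c hc0 hc⟩
        rw [Multiset.mem_toFinset, mem_roots hV0, IsRoot.def, ← hval c hc, ← hdv, hd0]
        simp [← coeff_zero_eq_eval_zero, h0, hs0.ne']
      · have hVcd : V.eval d = V.eval c := by rw [← hval c hc, ← hval d hdcrit, hdv]
        have hq1 := hcrit c hc
        have hq2 := hcrit d hdcrit
        have hcT : c⁻¹ ∈ T := by
          rw [Multiset.mem_toFinset, mem_roots hE0]
          refine hE c d hc0 hd0 hdc.symm ?_ ?_
          · rw [← hVe, ← hVe, hVcd]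
          · rw [← eval_derivative_Icc hd, ← eval_derivative_Icc hd, hq1, hq2]; ring
        have hdT : d⁻¹ ∈ T := by
          rw [Multiset.mem_toFinset, mem_roots hE0]
          refine hE d c hd0 hc0 hdc ?_ ?_
          · rw [← hVe, ← hVe, hVcd]
          · rw [← eval_derivative_Icc hd, ← eval_derivative_Icc hd, hq1, hq2]; ring
        have hβc : β c⁻¹ = a := by
          change α _ = a
          rw [inv_inv]; exact hα c hc0 hc
        have hβd : β d⁻¹ = a := by
          change α _ = a
          rw [inv_inv]; exact hα d hd0 hdcrit
        apply haP
        refine Finset.mem_filter.2 ⟨Finset.mem_image.2 ⟨_, hcT, hβc⟩, ?_⟩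
        apply Finset.one_lt_card.2
        exact ⟨c⁻¹, Finset.mem_filter.2 ⟨hcT, hβc⟩, d⁻¹, Finset.mem_filter.2 ⟨hdT, hβd⟩,
          fun h => hdc (inv_injective h).symm⟩

/-- The polynomial `X ^ n + ∑ a_i X ^ (n - i)` over the rationals. -/
noncomputable def baseP (n : ℕ) (b : ℕ → ℤ) : ℚ[X] :=
  X ^ n + ∑ i ∈ Finset.Ico 1 n, C ((b i : ℤ) : ℚ) * X ^ (n - i)

theorem baseP_lower (n : ℕ) (b : ℕ → ℤ) :
    (∑ i ∈ Finset.Ico 1 n, C ((b i : ℤ) : ℚ) * X ^ (n - i) : ℚ[X]).degree < (n : ℕ) := by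
  refine lt_of_le_of_lt (degree_sum_le _ _) ?_
  rw [Finset.sup_lt_iff (WithBot.bot_lt_coe _)]
  intro i hi
  rw [Finset.mem_Ico] at hi
  refine lt_of_le_of_lt (degree_C_mul_X_pow_le _ _) ?_
  exact_mod_cast (by omega : n - i < n)

theorem baseP_monic (n : ℕ) (b : ℕ → ℤ) : (baseP n b).Monic :=
  monic_X_pow_add (baseP_lower n b)

theorem baseP_natDegree (n : ℕ) (b : ℕ → ℤ) : (baseP n b).natDegree = n := by
  rw [baseP, natDegree_add_eq_left_of_degree_lt, natDegree_X_pow]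
  rw [degree_X_pow]; exact baseP_lower n b

theorem baseP_coeff (n r : ℕ) (hr : 0 < r) (hrn : r < n) (b : ℕ → ℤ) :
    (baseP n b).coeff (n - r) = b r := by
  rw [baseP, coeff_add, coeff_X_pow, if_neg (by omega), zero_add, finsetSum_coeff,
    Finset.sum_eq_single_of_mem r (by rw [Finset.mem_Ico]; omega)]
  · rw [coeff_C_mul_X_pow, if_pos rfl]
  · intro j hj hjr
    rw [Finset.mem_Ico] at hj
    rw [coeff_C_mul_X_pow, if_neg (by omega)]

theorem baseP_coeff_zero (n : ℕ) (hn : 0 < n) (b : ℕ → ℤ) : (baseP n b).coeff 0 = 0 := by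
  rw [baseP, coeff_add, coeff_X_pow, if_neg (by omega), zero_add, finsetSum_coeff]
  refine Finset.sum_eq_zero fun j hj => ?_
  rw [Finset.mem_Ico] at hj
  rw [coeff_C_mul_X_pow, if_neg (by omega)]

theorem baseP_update (n r : ℕ) (hr : 0 < r) (hrn : r < n) (a : ℕ → ℤ) (x : ℤ) :
    baseP n (Function.update a r x) =
      baseP n (Function.update a r 0) + C (x : ℚ) * X ^ (n - r) := by
  have hmem : r ∈ Finset.Ico 1 n := by rw [Finset.mem_Ico]; omega
  rw [baseP, baseP, add_assoc]
  congr 1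
  rw [← Finset.add_sum_erase _ _ hmem, ← Finset.add_sum_erase _ _ hmem]
  simp only [Function.update_self, Int.cast_zero, C_0, zero_mul, zero_add]
  rw [add_comm]
  congr 1
  refine Finset.sum_congr rfl fun j hj => ?_
  rw [Function.update_of_ne (Finset.ne_of_mem_erase hj),
    Function.update_of_ne (Finset.ne_of_mem_erase hj)]

theorem genPoly_baseP (n : ℕ) (b : ℕ → ℤ) :
    (X ^ n + ∑ i ∈ Finset.Ico 1 n, Polynomial.C ((b i : RatFunc ℚ)) * X ^ (n - i) +
      Polynomial.C (RatFunc.X) : Polynomial (RatFunc ℚ)) = genPoly (baseP n b) := by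
  rw [genPoly, baseP, Polynomial.map_add, Polynomial.map_sum, Polynomial.map_pow, map_X]
  congr 2
  refine Finset.sum_congr rfl fun j _ => ?_
  rw [Polynomial.map_mul, map_C, Polynomial.map_pow, map_X]
  congr 2
  exact (map_intCast (algebraMap ℚ (RatFunc ℚ)) (b j)).symm

theorem generic_trinomial_symmetric_galois_group (n r : ℕ) (hr : 0 < r) (hrn : r < n)
    (hco : Nat.Coprime n r) (a : ℕ → ℤ) :
    {x : ℤ | ¬ Nonempty
        ((X ^ n + ∑ i ∈ Finset.Ico 1 n,
            Polynomial.C ((Function.update a r x i : RatFunc ℚ)) * X ^ (n - i) +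
            Polynomial.C (RatFunc.X) : Polynomial (RatFunc ℚ)).Gal
          ≃* Equiv.Perm (Fin n))}.Finite ∧
    Set.ncard {x : ℤ | ¬ Nonempty
        ((X ^ n + ∑ i ∈ Finset.Ico 1 n,
            Polynomial.C ((Function.update a r x i : RatFunc ℚ)) * X ^ (n - i) +
            Polynomial.C (RatFunc.X) : Polynomial (RatFunc ℚ)).Gal
          ≃* Equiv.Perm (Fin n))} ≤ n ^ 2 + n := by
  have hn : 0 < n := by omega
  have hco' : Nat.Coprime n (n - r) := by
    rw [Nat.Coprime, Nat.gcd_self_sub_right hrn.le]; exact hco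
  obtain ⟨F, hF, hFstar⟩ := star_count n (n - r) (by omega) (by omega) hco'
    ((baseP n (Function.update a r 0)).map (algebraMap ℚ ℂ))
    ((baseP_monic n _).map _)
    (by rw [(baseP_monic n _).natDegree_map, baseP_natDegree n])
    (by rw [coeff_map, baseP_coeff_zero n hn, map_zero])
  have hsub : {x : ℤ | ¬ Nonempty
        ((X ^ n + ∑ i ∈ Finset.Ico 1 n,
            Polynomial.C ((Function.update a r x i : RatFunc ℚ)) * X ^ (n - i) +
            Polynomial.C (RatFunc.X) : Polynomial (RatFunc ℚ)).Gal
          ≃* Equiv.Perm (Fin n))} ⊆ (fun x : ℤ => (x : ℂ)) ⁻¹' (F : Set ℂ) := by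
    intro x hx
    by_contra hxF
    apply hx
    obtain ⟨hx0, hstar⟩ := hFstar (x : ℂ) hxF
    rw [genPoly_baseP n (Function.update a r x)]
    have hdeg := baseP_natDegree n (Function.update a r x)
    have key := gal_of_star (g := baseP n (Function.update a r x)) (baseP_monic n _)
      (s := n - r) (by omega) (by rw [hdeg]; omega) (by rw [hdeg]; exact hco')
      (by
        rw [baseP_coeff n r hr hrn, Function.update_self]
        intro h
        apply hx0
        have : x = 0 := by exact_mod_cast h
        rw [this, Int.cast_zero])
      (by
        rw [baseP_update n r hr hrn]
        simpa using hstar)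
    rwa [hdeg] at key
  have hinj : Function.Injective (fun x : ℤ => (x : ℂ)) := Int.cast_injective
  have hfin : ((fun x : ℤ => (x : ℂ)) ⁻¹' (F : Set ℂ)).Finite :=
    F.finite_toSet.preimage hinj.injOn
  refine ⟨hfin.subset hsub, (Set.ncard_le_ncard hsub hfin).trans ?_⟩
  refine le_trans ?_ hF
  rw [← Set.ncard_coe_finset F, ← Set.ncard_image_of_injective _ hinj]
  exact Set.ncard_le_ncard (Set.image_preimage_subset _ _) F.finite_toSet
end

section
/- Let n ≥ 9 be an integer and let G be a subgroup of the symmetric group S_n whose natural action on {1, …, n} is transitive, with G ≠ S_n and G ≠ A_n. Then the index of G in S_n satisfies [S_n : G] ≥ (1/2)·binom(n, ⌊n/2⌋), where ⌊n/2⌋ is the largest integer not exceeding n/2. -/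
open Equiv MulAction Pointwise

def ff (n : ℕ) : ℕ := 2 * ((n / 2).factorial * (n - n / 2).factorial)

lemma ff_succ (n : ℕ) : ff (n + 1) = ff n * (n / 2 + 1) := by
  unfold ff
  rcases Nat.even_or_odd' n with ⟨k, rfl | rfl⟩
  · have h1 : (2 * k + 1) / 2 = k := by omega
    have h2 : 2 * k / 2 = k := by omega
    have h3 : 2 * k + 1 - k = k + 1 := by omega
    have h4 : 2 * k - k = k := by omega
    rw [h1, h2, h3, h4, Nat.factorial_succ]; ring
  · have h1 : (2 * k + 1 + 1) / 2 = k + 1 := by omega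
    have h2 : (2 * k + 1) / 2 = k := by omega
    have h3 : 2 * k + 1 + 1 - (k + 1) = k + 1 := by omega
    have h4 : 2 * k + 1 - k = k + 1 := by omega
    rw [h1, h2, h3, h4, Nat.factorial_succ]; ring

lemma ff_add (n a : ℕ) : ff n * (n / 2 + 1) ^ a ≤ ff (n + a) := by
  induction a with
  | zero => simp
  | succ a ih =>
    rw [← add_assoc, ff_succ, pow_succ, ← mul_assoc]
    refine Nat.mul_le_mul ih ?_
    omega

lemma fact_le (c : ℕ) : (c + 1).factorial ≤ (c + 1) ^ c := by
  induction c with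
  | zero => simp
  | succ c ih =>
    rw [Nat.factorial_succ, pow_succ']
    exact Nat.mul_le_mul le_rfl (ih.trans (Nat.pow_le_pow_left (by omega) _))

lemma wreath_le (a b : ℕ) (ha : 2 ≤ a) (hb : 2 ≤ b) :
    b.factorial * a.factorial ^ b ≤ ff (a * b) := by
  induction b, hb using Nat.le_induction with
  | base =>
    have h1 : a * 2 / 2 = a := by omega
    have h2 : a * 2 - a = a := by omega
    simp [ff, h1, h2, sq]
  | succ b hb ih =>
    have key : (b + 1) * a.factorial ≤ (a * b / 2 + 1) ^ a := by
      obtain ⟨c, rfl⟩ : ∃ c, a = c + 1 := ⟨a - 1, by omega⟩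
      rw [pow_succ', Nat.factorial_succ, ← Nat.factorial_succ]
      have h1 : b ≤ (c + 1) * b / 2 := by
        rw [Nat.le_div_iff_mul_le (by norm_num)]; nlinarith
      have h2 : c + 1 ≤ (c + 1) * b / 2 := by
        rw [Nat.le_div_iff_mul_le (by norm_num)]; nlinarith
      refine Nat.mul_le_mul (by omega) ?_
      exact (fact_le c).trans (Nat.pow_le_pow_left (by omega) _)
    calc (b + 1).factorial * a.factorial ^ (b + 1)
        = (b.factorial * a.factorial ^ b) * ((b + 1) * a.factorial) := by
          rw [Nat.factorial_succ, pow_succ]; ring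
      _ ≤ ff (a * b) * (a * b / 2 + 1) ^ a := Nat.mul_le_mul ih key
      _ ≤ _ := by rw [mul_add, mul_one]; exact ff_add _ _

lemma choose_step (n : ℕ) : (n + 2).choose ((n + 2) / 2) ≤ 4 * n.choose (n / 2) := by
  have h : (n + 2) / 2 = n / 2 + 1 := by omega
  rw [h, Nat.choose_succ_succ']
  rcases Nat.eq_zero_or_pos (n / 2) with h0 | h0
  · rw [h0, Nat.choose_succ_succ']
    have := Nat.choose_le_middle 1 n
    rw [h0] at this
    simp at *
    omega
  · obtain ⟨k, hk⟩ : ∃ k, n / 2 = k + 1 := ⟨n / 2 - 1, by omega⟩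
    have h1 := Nat.choose_le_middle k n
    have h2 := Nat.choose_le_middle (k + 2) n
    rw [hk] at h1 h2 ⊢
    rw [Nat.choose_succ_succ', Nat.choose_succ_succ' n (k + 1)]
    have h3 : k + 1 + 1 = k + 2 := rfl
    rw [h3]
    omega

lemma choose_le_fact (n : ℕ) (hn : 11 ≤ n) : n.choose (n / 2) ≤ 2 * (n - n / 2).factorial := by
  induction n using Nat.strong_induction_on with
  | _ n ih =>
    by_cases h : n < 13
    · interval_cases n <;> decide
    · obtain ⟨m, rfl⟩ : ∃ m, n = m + 2 := ⟨n - 2, by omega⟩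
      have h1 := ih m (by omega) (by omega)
      have h2 := choose_step m
      have h3 : m + 2 - (m + 2) / 2 = (m - m / 2) + 1 := by omega
      rw [h3, Nat.factorial_succ]
      have h4 : 4 * (m - m / 2).factorial ≤ (m - m / 2 + 1) * (m - m / 2).factorial :=
        Nat.mul_le_mul_right _ (by omega)
      omega

lemma card_le_wreath {X B : Type*} [Fintype X] [Fintype B] (G : Subgroup (Perm X))
    [MulAction G B] (p : X → B) (hp : ∀ (g : G) x, p (g • x) = g • p x) (a : ℕ)
    (hf : ∀ β, Nat.card {x // p x = β} = a) :
    Nat.card G ≤ (Fintype.card B).factorial * a.factorial ^ (Fintype.card B) := by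
  classical
  have e : ∀ β, {x // p x = β} ≃ Fin a := fun β =>
    (Finite.equivFinOfCardEq (hf β))
  let F : G → Perm B × (B → (Fin a ↪ Fin a)) := fun g =>
    (MulAction.toPerm g, fun β => 
      ⟨fun j => e (g • β) ⟨g • ((e β).symm j : X), by rw [hp, ((e β).symm j).2]⟩, by
        intro j k h
        have h' := congrArg Subtype.val ((e (g • β)).injective h)
        exact (e β).symm.injective (Subtype.ext (MulAction.injective g h'))⟩)
  have hF : Function.Injective F := by
    intro g h hgh
    simp only [F, Prod.mk.injEq] at hgh
    obtain ⟨h1, h2⟩ := hgh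
    apply Subtype.ext
    ext x
    have h3 := congrFun h2 (p x)
    have h4 := DFunLike.congr_fun h3 (e (p x) ⟨x, rfl⟩)
    have h5 : g • p x = h • p x := DFunLike.congr_fun h1 (p x)
    have h6 : ∀ (β γ : B) (hβ : β = γ) (u : {x // p x = β}) (v : {x // p x = γ}),
        e β u = e γ v → (u : X) = v := by
      rintro β _ rfl u v h
      rw [(e β).injective h]
    have := h6 _ _ h5 _ _ h4
    simp only [Equiv.symm_apply_apply] at this
    exact this
  have := Nat.card_le_card_of_injective F hF
  simpa [Fintype.card_perm, Fintype.card_embedding_eq, Nat.descFactorial_self] using this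

lemma imprim {X : Type*} [Fintype X] [Nonempty X] (G : Subgroup (Perm X)) [IsPretransitive G X]
    (hG : ¬ IsPreprimitive G X) : Nat.card G ≤ ff (Fintype.card X) := by
  classical
  obtain ⟨S, hS, hS'⟩ : ∃ S : Set X, IsBlock G S ∧ ¬ IsTrivialBlock S := by
    by_contra! h
    exact hG ⟨fun {B} hB => h B hB⟩
  rw [IsTrivialBlock, not_or] at hS'
  obtain ⟨hs1, hs2⟩ := hS'
  have hne : S.Nonempty := by
    by_contra h
    rw [Set.not_nonempty_iff_eq_empty] at h
    subst h; simp at hs1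
  have ha : 2 ≤ S.ncard := by
    by_contra h
    exact hs1 ((Set.ncard_le_one_iff_subsingleton).1 (by omega))
  have hab := hS.ncard_block_mul_ncard_orbit_eq hne
  have hlt : S.ncard < Nat.card X := by
    by_contra h
    exact hs2 ((Set.eq_univ_iff_ncard S).2 (le_antisymm (Set.ncard_le_card S) (by omega)))
  have hb : 2 ≤ (orbit G S).ncard := by
    by_contra h
    have : (orbit G S).ncard = 0 ∨ (orbit G S).ncard = 1 := by omega
    rcases this with h | h <;> rw [h] at hab <;> omega
  have huniq : ∀ C D : orbit G S, ∀ x, x ∈ (C : Set X) → x ∈ (D : Set X) → C = D := by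
    rintro ⟨_, g, rfl⟩ ⟨_, h, rfl⟩ x hx hy
    apply Subtype.ext
    by_contra hne
    exact Set.disjoint_left.1 (hS hne) hx hy
  obtain ⟨x₀, hx₀⟩ := hne
  have hex : ∀ x : X, ∃ C : orbit G S, x ∈ (C : Set X) := by
    intro x
    obtain ⟨g, rfl⟩ := exists_smul_eq G x₀ x
    exact ⟨⟨g • S, g, rfl⟩, Set.smul_mem_smul_set hx₀⟩
  choose p hp using hex
  have : Fintype (orbit G S) := Fintype.ofFinite _
  have h := card_le_wreath (B := orbit G S) G p
    (fun g x => huniq _ _ (g • x) (hp _) (by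
      rw [orbit.coe_smul]; exact Set.smul_mem_smul_set (hp x))) S.ncard (by
      rintro ⟨_, g, rfl⟩
      have : ∀ x, p x = ⟨g • S, g, rfl⟩ ↔ x ∈ g • S := fun x =>
        ⟨fun h => by have := hp x; rw [h] at this; exact this, fun h => huniq _ _ x (hp x) h⟩
      have h2 : Nat.card {x // p x = ⟨g • S, g, rfl⟩} = (g • S).ncard := by
        rw [← Nat.card_coe_set_eq]
        exact Nat.card_congr (Equiv.subtypeEquivRight this)
      refine h2.trans ?_
      exact Set.ncard_image_of_injective _ (MulAction.injective g))
  have hc : Fintype.card (orbit G S) = (orbit G S).ncard := by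
    rw [← Nat.card_coe_set_eq, Nat.card_eq_fintype_card]
  rw [hc] at h
  refine h.trans ((wreath_le _ _ ha hb).trans ?_)
  rw [hab, Nat.card_eq_fintype_card]

lemma three_cycle {X : Type*} [Fintype X] [DecidableEq X] (g h : Perm X) (d : X) (hg : g d ≠ d)
    (hh : h d ≠ d) (hd : ∀ x, x ≠ d → g x = x ∨ h x = x) :
    (g * h * g⁻¹ * h⁻¹).IsThreeCycle := by
  have g1 : ∀ x, g⁻¹ (g x) = x := fun x => by simp
  have g2 : ∀ x, g (g⁻¹ x) = x := fun x => by simp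
  have h1 : ∀ x, h⁻¹ (h x) = x := fun x => by simp
  have h2 : ∀ x, h (h⁻¹ x) = x := fun x => by simp
  have key : (g * h * g⁻¹ * h⁻¹).support = {d, g d, h d} := by
    ext x
    simp only [Perm.mem_support, Perm.mul_apply, Finset.mem_insert, Finset.mem_singleton]
    have A : ∀ x, x ≠ d → g x ≠ x → h x = x := fun x h h' => (hd x h).resolve_left h'
    have A' : ∀ x, x ≠ d → h x ≠ x → g x = x := fun x h h' => (hd x h).resolve_right h'
    have g3 : ∀ x, g x = x → g⁻¹ x = x := fun x h => by rw [Perm.inv_eq_iff_eq, h]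
    have h3 : ∀ x, h x = x → h⁻¹ x = x := fun x h => by rw [Perm.inv_eq_iff_eq, h]
    have hgd : h (g d) = g d := A _ hg (fun e => hg (g.injective e))
    have ghd : g (h d) = h d := A' _ hh (fun e => hh (h.injective e))
    constructor
    · intro hx
      by_contra! hc
      obtain ⟨c1, c2, c3⟩ := hc
      apply hx
      by_cases hhx : h x = x
      · rw [h3 x hhx]
        by_cases hgx : g x = x
        · rw [g3 x hgx, hhx, hgx]
        · have z1 : g⁻¹ x ≠ d := fun e => c2 (by rw [← e, g2])
          rw [A _ z1 (by rw [g2]; intro e; apply hgx; rw [e, g2, ← e]), g2]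
      · have z1 : h⁻¹ x ≠ d := fun e => c3 (by rw [← e, h2])
        have z2 : g (h⁻¹ x) = h⁻¹ x :=
          A' _ z1 (by rw [h2]; intro e; apply hhx; rw [e, h2, ← e])
        rw [g3 _ z2, h2, A' x c1 hhx]
    · rintro (rfl | rfl | rfl)
      · have z1 : h⁻¹ x ≠ x := fun e => hh (by rw [← e, h2, e])
        have z2 : g (h⁻¹ x) = h⁻¹ x := A' _ z1 (by rw [h2]; exact z1.symm)
        rw [g3 _ z2, h2]; exact hg
      · rw [h3 _ hgd, g1, ghd]
        intro e
        rw [← e] at hgd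
        exact hh (h.injective hgd)
      · have z1 : g⁻¹ d ≠ d := fun e => hg (by rw [← e, g2, e])
        have z2 : h (g⁻¹ d) = g⁻¹ d := A _ z1 (by rw [g2]; exact z1.symm)
        rw [h1, z2, g2]; exact hh.symm
  rw [← card_support_eq_three_iff, key]
  have : g d ≠ h d := by
    intro e
    rcases hd (g d) hg with h | h
    · exact hg (g.injective h)
    · rw [e] at h; exact hh (Equiv.injective _ h)
  rw [Finset.card_eq_three]
  exact ⟨_, _, _, hg.symm, hh.symm, this, rfl⟩

lemma base {X : Type*} [Fintype X] [DecidableEq X] (G : Subgroup (Perm X))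
    (h3 : ∀ g ∈ G, ¬ g.IsThreeCycle) :
    ∃ D : Finset X, D.card = Fintype.card X / 2 ∧ ∀ g ∈ G, (∀ x ∈ D, g x = x) → g = 1 := by
  classical
  let P : Finset X → Prop := fun D => ∀ g ∈ G, (∀ x ∈ D, g x = x) → g = 1
  have hP : ∃ k, ∃ D, P D ∧ D.card = k :=
    ⟨_, Finset.univ, fun g _ h => by ext x; simpa using h x (by simp), rfl⟩
  obtain ⟨D, hD, hk⟩ := Nat.find_spec hP
  have hmin : ∀ E, P E → D.card ≤ E.card := fun E hE => by
    rw [hk]; exact Nat.find_min' hP ⟨E, hE, rfl⟩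
  have hle : D.card ≤ Fintype.card X / 2 := by
    by_contra hlt
    have h1 : ¬ P Dᶜ := fun h => by
      have := hmin _ h
      rw [Finset.card_compl] at this
      omega
    simp only [P] at h1
    push Not at h1
    obtain ⟨g, hg, hgf, hg1⟩ := h1
    obtain ⟨d, hd⟩ : ∃ d, g d ≠ d := by
      by_contra! h
      exact hg1 (by ext x; simpa using h x)
    have hdD : d ∈ D := by
      by_contra h
      exact hd (hgf d (by simpa using h))
    have h2 : ¬ P (D.erase d) := fun h => by
      have := hmin _ h
      rw [Finset.card_erase_of_mem hdD] at this
      have : 0 < D.card := Finset.card_pos.2 ⟨d, hdD⟩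
      omega
    simp only [P] at h2
    push Not at h2
    obtain ⟨h, hh, hhf, hh1⟩ := h2
    have hhd : h d ≠ d := by
      intro e
      apply hh1
      apply hD h hh
      intro x hx
      by_cases hxd : x = d
      · rw [hxd, e]
      · exact hhf x (by simp [hx, hxd])
    refine h3 _ ?_ (three_cycle g h d hd hhd ?_)
    · exact G.mul_mem (G.mul_mem (G.mul_mem hg hh) (G.inv_mem hg)) (G.inv_mem hh)
    · intro x hx
      by_cases hxD : x ∈ D
      · exact Or.inr (hhf x (by simp [hx, hxD]))
      · exact Or.inl (hgf x (by simpa using hxD))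
  obtain ⟨E, hDE, hE⟩ := Finset.exists_superset_card_eq hle (Nat.div_le_self _ _)
  exact ⟨E, hE, fun g hg h => hD g hg fun x hx => h x (hDE hx)⟩

def fmap {X : Type*} [DecidableEq X] (G : Subgroup (Perm X)) (D : Finset X) :
    Perm {x // x ∉ D} → Perm X ⧸ G := fun σ => QuotientGroup.mk (Perm.ofSubtype σ)

lemma fmap_inj {X : Type*} [DecidableEq X] (G : Subgroup (Perm X)) (D : Finset X)
    (hD : ∀ g ∈ G, (∀ x ∈ D, g x = x) → g = 1) : Function.Injective (fmap G D) := by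
  intro σ τ h
  have h1 := QuotientGroup.eq.1 h
  rw [← map_inv, ← map_mul] at h1
  have := hD _ h1 (fun x hx => Perm.ofSubtype_apply_of_not_mem _ (by simpa using hx))
  rw [← map_one (Perm.ofSubtype (p := fun x => x ∉ D))] at this
  exact (inv_mul_eq_one.1 (Perm.ofSubtype_injective this))

lemma card_dom {X : Type*} [Fintype X] [DecidableEq X] (D : Finset X) :
    Nat.card (Perm {x // x ∉ D}) = (Fintype.card X - D.card).factorial := by
  rw [Nat.card_perm, Nat.card_eq_fintype_card]
  congr 1
  simp [Fintype.card_subtype_compl]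

lemma le_index {X : Type*} [Fintype X] [DecidableEq X] (G : Subgroup (Perm X)) (D : Finset X)
    (hD : ∀ g ∈ G, (∀ x ∈ D, g x = x) → g = 1) :
    (Fintype.card X - D.card).factorial ≤ G.index := by
  rw [← card_dom]
  exact Nat.card_le_card_of_injective _ (fmap_inj G D hD)

lemma sharp {X : Type*} [Fintype X] [DecidableEq X] (G : Subgroup (Perm X)) (D : Finset X)
    (hD : ∀ g ∈ G, (∀ x ∈ D, g x = x) → g = 1)
    (hi : G.index = (Fintype.card X - D.card).factorial) (σ : Perm X) :
    ∃ g ∈ G, ∀ x ∈ D, g x = σ x := by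
  have hb : Function.Bijective (fmap G D) :=
    (Nat.bijective_iff_injective_and_card _).2 ⟨fmap_inj G D hD, by rw [card_dom]; exact hi.symm⟩
  obtain ⟨τ, hτ⟩ := hb.2 (QuotientGroup.mk σ⁻¹)
  have h1 := G.inv_mem (QuotientGroup.eq.1 hτ)
  refine ⟨_, h1, fun x hx => ?_⟩
  simp only [mul_inv_rev, inv_inv, Perm.mul_apply]
  rw [Perm.ofSubtype_apply_of_not_mem _ (by simpa using hx)]

lemma dec5 : ∀ t : Perm (Fin 5), t * t = 1 → (Finset.univ.filter fun i => t i = i).card ≤ 1 →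
    Perm.sign t = 1 := by decide +kernel

lemma dec5s : ∀ i j : Fin 5, i ≠ j → 
    (Finset.univ.filter fun k => Equiv.swap i j k = k).card = 3 := by decide +kernel

lemma no_sharp5 (G : Subgroup (Perm (Fin 5 ⊕ Fin 5)))
    (h1 : ∀ g ∈ G, (∀ i, g (Sum.inl i) = Sum.inl i) → g = 1)
    (h2 : ∀ σ : Perm (Fin 5 ⊕ Fin 5), ∃ g ∈ G, ∀ i, g (Sum.inl i) = σ (Sum.inl i)) : False := by
  have h5 : ∀ g ∈ G, 5 ≤ (Finset.univ.filter fun x => g x = x).card → g = 1 := by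
    intro g hg hc
    obtain ⟨S, hS, hS5⟩ := Finset.exists_subset_card_eq hc
    let p : Fin 5 ↪ (Fin 5 ⊕ Fin 5) :=
      (S.equivFinOfCardEq hS5).symm.toEmbedding.trans (Function.Embedding.subtype _)
    have hp : ∀ i, g (p i) = p i := fun i => by
      have := hS ((S.equivFinOfCardEq hS5).symm i).2
      exact (Finset.mem_filter.1 this).2
    obtain ⟨σ, hσ⟩ := (isMultiplyPretransitive_iff (n := 5)).1
      (Perm.isMultiplyPretransitive (Fin 5 ⊕ Fin 5) 5) Function.Embedding.inl p
    obtain ⟨k, hk, hkσ⟩ := h2 σ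
    have hkp : ∀ i, k (Sum.inl i) = p i := fun i => by
      rw [hkσ, ← hσ]; rfl
    have := h1 (k⁻¹ * g * k) (G.mul_mem (G.mul_mem (G.inv_mem hk) hg) hk) (fun i => by
      rw [Perm.mul_apply, Perm.mul_apply, hkp, hp, ← hkp]
      simp)
    have h3 : g = k * (k⁻¹ * g * k) * k⁻¹ := by group
    rw [h3, this]; simp
  have hex : ∀ s : Perm (Fin 5), ∃ t : Perm (Fin 5), Perm.sumCongr s t ∈ G := by
    intro s
    obtain ⟨g, hg, hgi⟩ := h2 (Perm.sumCongr s 1)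
    obtain ⟨⟨u, t⟩, hut⟩ := Perm.mem_sumCongrHom_range_of_perm_mapsTo_inl (σ := g) (by
      rintro _ ⟨i, rfl⟩
      rw [hgi]; simp)
    refine ⟨t, ?_⟩
    have : u = s := by
      ext i
      have := hgi i
      rw [← hut] at this
      simp at this
      rw [this]
    rw [← this]
    rw [← hut] at hg
    exact hg
  choose f hf using hex
  have huniq : ∀ s t t', Perm.sumCongr s t ∈ G → Perm.sumCongr s t' ∈ G → t = t' := by
    intro s t t' h h'
    have := h1 _ (G.mul_mem (G.inv_mem h) h') (by intro i; simp)
    rw [inv_mul_eq_one] at this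
    ext i
    have := DFunLike.congr_fun this (Sum.inr i)
    simp at this
    rw [this]
  let φ : Perm (Fin 5) →* Perm (Fin 5) := MonoidHom.mk' f (fun a b => huniq (a * b) _ _ (hf _) (by
    rw [← Perm.sumCongr_mul]; exact G.mul_mem (hf a) (hf b)))
  have hcard : ∀ s t : Perm (Fin 5), (Finset.univ.filter fun x => Perm.sumCongr s t x = x).card =
      (Finset.univ.filter fun i => s i = i).card + (Finset.univ.filter fun i => t i = i).card := by
    intro s t
    rw [← Finset.card_disjSum]
    congr 1
    ext x
    rcases x with x | x <;> simp
  have hinj : Function.Injective φ := by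
    rw [injective_iff_map_eq_one]
    intro s hs
    have h := hf s
    have hs' : f s = 1 := hs
    rw [hs'] at h
    have := h5 _ h (by rw [hcard]; simp)
    ext i
    have := DFunLike.congr_fun this (Sum.inl i)
    simp at this
    simp [this]
  have hsurj : Function.Surjective φ := Finite.surjective_of_injective hinj
  have hsign : ∀ s, Perm.sign (φ s) = 1 := by
    intro s
    induction s using Perm.swap_induction_on with
    | one => simp
    | swap_mul s x y hxy ih =>
      rw [map_mul, map_mul, ih, mul_one]
      apply dec5
      · rw [← map_mul, Equiv.swap_mul_self, map_one]
      · by_contra hc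
        have := h5 _ (hf (Equiv.swap x y)) (by
          rw [hcard, dec5s x y hxy]
          change ¬ (Finset.univ.filter fun i => f (Equiv.swap x y) i = i).card ≤ 1 at hc
          omega)
        have := DFunLike.congr_fun this (Sum.inl x)
        simp at this
        exact hxy this.symm
  obtain ⟨s, hs⟩ := hsurj (Equiv.swap 0 1)
  have := hsign s
  rw [hs] at this
  revert this
  decide

lemma no_sharp10 (G : Subgroup (Perm (Fin 10))) (D : Finset (Fin 10)) (hDc : D.card = 5)
    (hD : ∀ g ∈ G, (∀ x ∈ D, g x = x) → g = 1)
    (hs : ∀ σ : Perm (Fin 10), ∃ g ∈ G, ∀ x ∈ D, g x = σ x) : False := by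
  classical
  have hc : Fintype.card {x // x ∉ D} = 5 := by
    rw [Fintype.card_subtype_compl]; simp [hDc]
  let e : Fin 5 ⊕ Fin 5 ≃ Fin 10 :=
    (Equiv.sumCongr (D.equivFinOfCardEq hDc).symm (Fintype.equivFinOfCardEq hc).symm).trans
      (Equiv.sumCompl (fun x => x ∈ D))
  have he : ∀ i, e (Sum.inl i) ∈ D := fun i => ((D.equivFinOfCardEq hDc).symm i).2
  have he' : ∀ x ∈ D, ∃ i, e (Sum.inl i) = x := fun x hx =>
    ⟨D.equivFinOfCardEq hDc ⟨x, hx⟩, by simp [e]⟩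
  let F : Perm (Fin 5 ⊕ Fin 5) ≃* Perm (Fin 10) := e.permCongrHom
  have hF : ∀ σ x, F σ (e x) = e (σ x) := fun σ x => by simp [F, Equiv.permCongrHom]
  refine no_sharp5 (G.comap F.toMonoidHom) ?_ ?_
  · intro g hg hgi
    have := hD (F g) hg (fun x hx => by
      obtain ⟨i, rfl⟩ := he' x hx
      rw [hF, hgi])
    exact (map_eq_one_iff F F.injective).1 this
  · intro σ
    obtain ⟨g, hg, hgx⟩ := hs (F σ)
    refine ⟨F.symm g, ?_, fun i => ?_⟩
    · change F (F.symm g) ∈ G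
      simpa using hg
    · apply e.injective
      rw [← hF, MulEquiv.apply_symm_apply, hgx _ (he i), hF]

/-- For `n ≥ 9`, every transitive subgroup `G` of `Sₙ` other than `Sₙ` and `Aₙ` has index at
least `(1/2)·binom(n, ⌊n/2⌋)` in `Sₙ`. -/
theorem index_lower_bound_transitive_subgroup (n : ℕ) (hn : 9 ≤ n)
    (G : Subgroup (Equiv.Perm (Fin n)))
    (htrans : ∀ i j : Fin n, ∃ σ ∈ G, σ i = j)
    (hG1 : G ≠ ⊤) (hG2 : G ≠ alternatingGroup (Fin n)) :
    (n.choose (n / 2) : ℝ) / 2 ≤ (G.index : ℝ) := by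
  have : Nonempty (Fin n) := ⟨⟨0, by omega⟩⟩
  have : Nontrivial (Fin n) := Fin.nontrivial_iff_two_le.2 (by omega)
  have hpt : IsPretransitive G (Fin n) := ⟨fun i j => by
    obtain ⟨σ, hσ, h⟩ := htrans i j
    exact ⟨⟨σ, hσ⟩, h⟩⟩
  suffices h : n.choose (n / 2) ≤ 2 * G.index by
    have : (n.choose (n / 2) : ℝ) ≤ 2 * (G.index : ℝ) := by exact_mod_cast h
    linarith
  by_cases hprim : IsPreprimitive G (Fin n)
  · have h3 : ∀ g ∈ G, ¬ g.IsThreeCycle := by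
      intro g hg h3
      have hle := Perm.alternatingGroup_le_of_isPreprimitive_of_isThreeCycle_mem hprim h3 hg
      have hdvd := Subgroup.index_dvd_of_le hle
      rw [alternatingGroup.index_eq_two, Nat.dvd_prime Nat.prime_two] at hdvd
      rcases hdvd with h | h
      · exact hG1 (Subgroup.index_eq_one.1 h)
      · exact hG2 (Perm.eq_alternatingGroup_of_index_eq_two h)
    obtain ⟨D, hDc, hD⟩ := base G h3
    have hle := le_index G D hD
    have hsh := sharp G D hD
    rw [hDc, Fintype.card_fin] at hle hsh
    rw [Fintype.card_fin] at hDc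
    by_cases h11 : 11 ≤ n
    · exact (choose_le_fact n h11).trans (Nat.mul_le_mul_left _ hle)
    · have : n = 9 ∨ n = 10 := by omega
      rcases this with rfl | rfl
      · have e1 : Nat.choose 9 (9 / 2) = 126 := by decide
        have e2 : (9 - 9 / 2).factorial = 120 := by decide
        rw [e2] at hle
        rw [e1]; omega
      · have e1 : Nat.choose 10 (10 / 2) = 252 := by decide
        have e2 : (10 - 10 / 2).factorial = 120 := by decide
        rw [e2] at hle hsh
        rw [e1]
        by_contra hlt
        refine no_sharp10 G D hDc hD (hsh ?_)
        have hdvd : G.index ∣ 3628800 := by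
          have := G.index_dvd_card
          rw [Nat.card_perm, Nat.card_eq_fintype_card, Fintype.card_fin] at this
          exact this
        have hlt' : G.index < 126 := by omega
        clear hsh
        generalize G.index = m at *
        interval_cases m
        · rfl
        all_goals omega
  · have h1 := imprim G hprim
    rw [Fintype.card_fin] at h1
    have h2 := G.card_mul_index
    rw [Nat.card_perm, Nat.card_eq_fintype_card (α := Fin n), Fintype.card_fin] at h2
    have h4 := Nat.choose_mul_factorial_mul_factorial (Nat.div_le_self n 2)
    have hpos : 0 < (n / 2).factorial * (n - n / 2).factorial :=
      Nat.mul_pos (Nat.factorial_pos _) (Nat.factorial_pos _)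
    refine Nat.le_of_mul_le_mul_right ?_ hpos
    rw [← mul_assoc, h4, ← h2]
    calc Nat.card G * G.index ≤ ff n * G.index := Nat.mul_le_mul_right _ h1
      _ = _ := by unfold ff; ring
end

section
/- Let n ≥ 9 be an integer and let G be a subgroup of the symmetric group S_n with G ≠ S_n and G ≠ A_n. Then either G has index n or index 2n in S_n and fixes some element of {1, …, n} (i.e., there exists i ∈ {1, …, n} with σ(i) = i for all σ ∈ G), or G has index at least n(n−1)/2 in S_n. -/
open scoped Pointwise

/-- Covering bound: translates of a `G`-invariant finset indexed by cosets of `G`. -/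
theorem IndexDich.cover {S α : Type*} [Group S] [Finite S] [MulAction S α] [DecidableEq α]
    (G : Subgroup S) (X T : Finset α) (hT : ∀ g ∈ G, ∀ t ∈ T, g • t ∈ T)
    (hX : ∀ x ∈ X, ∃ g : S, ∃ t ∈ T, g • t = x) : X.card ≤ G.index * T.card := by
  classical
  have : Fintype (S ⧸ G) := Fintype.ofFinite _
  have h1 : X ⊆ ((Finset.univ : Finset (S ⧸ G)) ×ˢ T).image (fun p => p.1.out • p.2) := by
    intro x hx
    obtain ⟨g, t, ht, rfl⟩ := hX x hx
    obtain ⟨h, hh⟩ := QuotientGroup.mk_out_eq_mul G g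
    rw [Finset.mem_image]
    refine ⟨((g : S ⧸ G), (h : S)⁻¹ • t), ?_, ?_⟩
    · simp [hT _ (G.inv_mem h.2) t ht]
    · simp only [hh, smul_smul]
      simp
  calc X.card ≤ _ := Finset.card_le_card h1
    _ ≤ _ := Finset.card_image_le
    _ = _ := by
      rw [Finset.card_product, Subgroup.index, Nat.card_eq_fintype_card, Finset.card_univ]

theorem IndexDich.choose_mono (n j k : ℕ) (hjk : j ≤ k) (hk : 2 * k ≤ n) :
    n.choose j ≤ n.choose k := by
  induction k, hjk using Nat.le_induction with
  | base => exact le_rfl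
  | succ k hjk ih =>
    exact (ih (by omega)).trans (Nat.choose_le_succ_of_lt_half_left (by omega))

theorem IndexDich.choose_two_le (n k : ℕ) (h2 : 2 ≤ k) (hk : k + 2 ≤ n) :
    n * (n - 1) / 2 ≤ n.choose k := by
  rw [← Nat.choose_two_right]
  rcases le_total (2 * k) n with h | h
  · exact choose_mono n 2 k h2 h
  · rw [← Nat.choose_symm (show k ≤ n by omega)]
    exact choose_mono n 2 (n - k) (by omega) (by omega)

theorem IndexDich.finset_orbit {n : ℕ} (s t : Finset (Fin n)) (h : s.card = t.card) :
    ∃ σ : Equiv.Perm (Fin n), σ • s = t := by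
  obtain ⟨σ, hσ⟩ := Equiv.Perm.exists_map_finset_eq s t h
  refine ⟨σ, ?_⟩
  rw [← hσ, Finset.map_eq_image]
  rfl

theorem IndexDich.pair_orbit {n : ℕ} (s t s' t' : Finset (Fin n)) (hs : s.card = s'.card)
    (ht : t.card = t'.card) (hd : Disjoint s t) (hd' : Disjoint s' t') :
    ∃ σ : Equiv.Perm (Fin n), σ • s = s' ∧ σ • t = t' := by
  have e1 : s ≃ s' := Finset.equivOfCardEq hs
  have e2 : t ≃ t' := Finset.equivOfCardEq ht
  obtain ⟨σ, hσ⟩ := Equiv.Perm.exists_extending_pair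
    (α := s ⊕ t) (β := Fin n) (Sum.elim (fun x => x.1) (fun x => x.1))
    (Sum.elim (fun x => (e1 x).1) (fun x => (e2 x).1))
    (by
      refine Function.Injective.sumElim Subtype.val_injective Subtype.val_injective ?_
      intro a b hab
      exact Finset.disjoint_left.1 hd a.2 (hab ▸ b.2))
    (by
      refine Function.Injective.sumElim (Subtype.val_injective.comp e1.injective)
        (Subtype.val_injective.comp e2.injective) ?_
      intro a b hab
      exact Finset.disjoint_left.1 hd' (e1 a).2 (hab ▸ (e2 b).2))
  refine ⟨σ, ?_, ?_⟩
  · apply Finset.eq_of_subset_of_card_le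
    · intro y hy
      obtain ⟨x, hx, rfl⟩ := Finset.mem_smul_finset.1 hy
      have := hσ (Sum.inl ⟨x, hx⟩)
      simp only [Sum.elim_inl] at this
      rw [Equiv.Perm.smul_def, this]
      exact (e1 _).2
    · rw [Finset.card_smul_finset, hs]
  · apply Finset.eq_of_subset_of_card_le
    · intro y hy
      obtain ⟨x, hx, rfl⟩ := Finset.mem_smul_finset.1 hy
      have := hσ (Sum.inr ⟨x, hx⟩)
      simp only [Sum.elim_inr] at this
      rw [Equiv.Perm.smul_def, this]
      exact (e2 _).2
    · rw [Finset.card_smul_finset, ht]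

theorem IndexDich.single_bound {n a : ℕ} (G : Subgroup (Equiv.Perm (Fin n)))
    (T : Finset (Finset (Fin n))) (hT : ∀ g ∈ G, ∀ t ∈ T, g • t ∈ T)
    (t₀ : Finset (Fin n)) (h₀ : t₀ ∈ T) (hc : t₀.card = a) :
    n.choose a ≤ G.index * T.card := by
  have := cover G ((Finset.univ : Finset (Fin n)).powersetCard a) T hT (by
    intro x hx
    rw [Finset.mem_powersetCard] at hx
    obtain ⟨σ, hσ⟩ := finset_orbit t₀ x (by rw [hc, hx.2])
    exact ⟨σ, t₀, h₀, hσ⟩)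
  simpa using this

theorem IndexDich.pair_bound {n a : ℕ} (G : Subgroup (Equiv.Perm (Fin n)))
    (T : Finset (Finset (Fin n))) (hT : ∀ g ∈ G, ∀ t ∈ T, g • t ∈ T)
    (t₀ t₁ : Finset (Fin n)) (h₀ : t₀ ∈ T) (h₁ : t₁ ∈ T) (hc : t₀.card = a) (hc1 : t₁.card = a)
    (hd : Disjoint t₀ t₁) :
    n.choose a * (n - a).choose a ≤ G.index * (T.card * T.card) := by
  classical
  have := cover G (((((Finset.univ : Finset (Fin n)).powersetCard a).sigma
      (fun s => (sᶜ).powersetCard a))).image (fun p => (p.1, p.2))) (T ×ˢ T) (by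
        rintro g hg ⟨s, t⟩ hst
        rw [Finset.mem_product] at hst
        simp [hT g hg s hst.1, hT g hg t hst.2]) (by
    rintro ⟨s, t⟩ hx
    simp only [Finset.mem_image, Finset.mem_sigma, Finset.mem_powersetCard, Sigma.exists,
      Prod.mk.injEq] at hx
    obtain ⟨s', t', ⟨⟨-, hs⟩, hts, ht⟩, rfl, rfl⟩ := hx
    obtain ⟨σ, hσ, hσ'⟩ := pair_orbit t₀ t₁ s' t' (by rw [hc, hs]) (by rw [hc1, ht]) hd
      (Finset.disjoint_left.2 fun x hx hx' => by
        have := hts hx'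
        rw [Finset.mem_compl] at this
        exact this hx)
    exact ⟨σ, (t₀, t₁), by simp [h₀, h₁], by simp [hσ, hσ']⟩)
  rw [Finset.card_image_of_injective _ (by
    rintro ⟨a, b⟩ ⟨c, d⟩ h
    simp only [Prod.mk.injEq] at h
    obtain ⟨rfl, rfl⟩ := h
    rfl), Finset.card_sigma, Finset.card_product] at this
  refine le_trans (le_of_eq ?_) this
  rw [Finset.sum_congr rfl (g := fun _ => (n - a).choose a)]
  · simp
  · intro s hs
    rw [Finset.mem_powersetCard] at hs
    rw [Finset.card_powersetCard, Finset.card_compl, hs.2, Fintype.card_fin]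

theorem IndexDich.arith4 (n a b I : ℕ) (hn : 9 ≤ n) (hab : a * b = n) (ha : 4 ≤ a) (hb : 2 ≤ b)
    (h : n.choose a ≤ I * b) : n * (n - 1) / 2 ≤ I := by
  obtain ⟨m, rfl⟩ : ∃ m, n = m + 1 := ⟨n - 1, by omega⟩
  obtain ⟨c, rfl⟩ : ∃ c, a = c + 1 := ⟨a - 1, by omega⟩
  have h1 := Nat.add_one_mul_choose_eq m c
  have h2 : (m + 1) * m.choose c ≤ (m + 1) * I := by
    rw [h1]
    calc (m + 1).choose (c + 1) * (c + 1) ≤ I * b * (c + 1) := Nat.mul_le_mul_right _ h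
      _ = (m + 1) * I := by rw [← hab]; ring
  have h3 : m.choose c ≤ I := Nat.le_of_mul_le_mul_left h2 (by omega)
  have h4 : m.choose 3 ≤ m.choose c := choose_mono m 3 c (by omega) (by nlinarith)
  refine le_trans ?_ (h4.trans h3)
  obtain ⟨k, rfl⟩ : ∃ k, m = k + 3 := ⟨m - 3, by omega⟩
  have h5 := Nat.descFactorial_eq_factorial_mul_choose (k + 3) 3
  simp [Nat.descFactorial, Nat.factorial] at h5
  apply Nat.div_le_of_le_mul
  have : 5 ≤ k := by omega
  simp only [Nat.add_sub_cancel]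
  nlinarith [mul_pos (show 0 < k + 3 by omega) (show 0 < k + 1 by omega)]

theorem IndexDich.arith2 (b I : ℕ) (hb : 5 ≤ b)
    (h : (2 * b).choose 2 * (2 * b - 2).choose 2 ≤ I * (b * b)) :
    2 * b * (2 * b - 1) / 2 ≤ I := by
  obtain ⟨k, rfl⟩ : ∃ k, b = k + 5 := ⟨b - 5, by omega⟩
  have e1 : (2 * (k + 5)).choose 2 = (k + 5) * (2 * k + 9) := by
    rw [Nat.choose_two_right]
    apply Nat.div_eq_of_eq_mul_right (by norm_num)
    rw [show 2 * (k + 5) - 1 = 2 * k + 9 by omega]; ring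
  have e2 : (2 * (k + 5) - 2).choose 2 = (k + 4) * (2 * k + 7) := by
    rw [Nat.choose_two_right]
    apply Nat.div_eq_of_eq_mul_right (by norm_num)
    rw [show 2 * (k + 5) - 2 - 1 = 2 * k + 7 by omega,
      show 2 * (k + 5) - 2 = 2 * (k + 4) by omega]; ring
  rw [← Nat.choose_two_right, e1]
  rw [e1, e2] at h
  refine Nat.le_of_mul_le_mul_right (le_trans ?_ h) (show 0 < (k + 5) * (k + 5) by positivity)
  apply Nat.mul_le_mul_left
  nlinarith

theorem IndexDich.arith3 (b I : ℕ) (hb : 3 ≤ b)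
    (h : (3 * b).choose 3 * (3 * b - 3).choose 3 ≤ I * (b * b)) :
    3 * b * (3 * b - 1) / 2 ≤ I := by
  obtain ⟨k, rfl⟩ : ∃ k, b = k + 3 := ⟨b - 3, by omega⟩
  have e1 := Nat.descFactorial_eq_factorial_mul_choose (3 * k + 9) 3
  have e2 := Nat.descFactorial_eq_factorial_mul_choose (3 * k + 6) 3
  simp [Nat.descFactorial, Nat.factorial] at e1 e2
  rw [show 3 * (k + 3) - 3 = 3 * k + 6 by omega, show 3 * (k + 3) = 3 * k + 9 by omega] at h
  rw [show 3 * (k + 3) = 3 * k + 9 by omega, show 3 * k + 9 - 1 = 3 * k + 8 by omega]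
  apply Nat.div_le_of_le_mul
  have h36 : ((3 * k + 7) * ((3 * k + 8) * (3 * k + 9))) * ((3 * k + 4) * ((3 * k + 5) * (3 * k + 6)))
      ≤ (2 * I) * (18 * ((k + 3) * (k + 3))) := by
    have := Nat.mul_le_mul_left 36 h
    calc _ = 36 * ((3 * k + 9).choose 3 * (3 * k + 6).choose 3) := by
            rw [e1, e2]; ring
      _ ≤ _ := this
      _ = _ := by ring
  refine Nat.le_of_mul_le_mul_right (le_trans ?_ h36) (show 0 < 18 * ((k + 3) * (k + 3)) by positivity)
  calc (3 * k + 9) * (3 * k + 8) * (18 * ((k + 3) * (k + 3)))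
      ≤ (3 * k + 9) * (3 * k + 8) * ((3 * k + 7) * ((3 * k + 4) * ((3 * k + 5) * (3 * k + 6)))) := by
        apply Nat.mul_le_mul_left
        nlinarith [Nat.zero_le k, Nat.zero_le (k^2), Nat.zero_le (k^3), Nat.zero_le (k^4)]
    _ = _ := by ring

theorem IndexDich.apply_inv {n : ℕ} (g : Equiv.Perm (Fin n)) (x : Fin n) : g (g⁻¹ x) = x := by
  simp

theorem IndexDich.inv_apply {n : ℕ} (g : Equiv.Perm (Fin n)) (x : Fin n) : g⁻¹ (g x) = x := by
  simp

theorem IndexDich.threeCycle {n : ℕ} (g h : Equiv.Perm (Fin n)) (d : Fin n)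
    (hg : g d ≠ d) (hh : h d ≠ d) (hgh : ∀ x, g x ≠ x → h x ≠ x → x = d) :
    (g * h * g⁻¹ * h⁻¹).IsThreeCycle := by
  have key : ∀ x, x ≠ d → g x ≠ x → h x = x := fun x hx h1 => by
    by_contra h2; exact hx (hgh x h1 h2)
  have key' : ∀ x, x ≠ d → h x ≠ x → g x = x := fun x hx h1 => by
    by_contra h2; exact hx (hgh x h2 h1)
  have gi : ∀ x, g⁻¹ x = x ↔ g x = x := fun x => by rw [Equiv.Perm.inv_eq_iff_eq, eq_comm]
  have hi : ∀ x, h⁻¹ x = x ↔ h x = x := fun x => by rw [Equiv.Perm.inv_eq_iff_eq, eq_comm]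
  have hfix_gd : h (g d) = g d := key _ hg (by simpa using hg)
  have gfix_hd : g (h d) = h d := key' _ hh (by simpa using hh)
  have hfix_gid : h (g⁻¹ d) = g⁻¹ d := key _ (by rwa [Ne, gi]) (by
    intro h1; rw [apply_inv] at h1; exact hg ((gi d).1 h1.symm))
  have gfix_hid : g (h⁻¹ d) = h⁻¹ d := key' _ (by rwa [Ne, hi]) (by
    intro h1; rw [apply_inv] at h1; exact hh ((hi d).1 h1.symm))
  have hne : g d ≠ h d := by
    intro h1
    rw [h1] at hfix_gd
    exact hh (h.injective hfix_gd)
  rw [← card_support_eq_three_iff]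
  have : (g * h * g⁻¹ * h⁻¹).support = {d, g d, h d} := by
    ext x
    simp only [Equiv.Perm.mem_support, Equiv.Perm.mul_apply, Finset.mem_insert,
      Finset.mem_singleton]
    constructor
    · intro hx
      by_contra hcon
      push Not at hcon
      obtain ⟨c1, c2, c3⟩ := hcon
      apply hx
      by_cases hhx : h x = x
      · rw [(hi x).2 hhx]
        by_cases hgx : g x = x
        · rw [(gi x).2 hgx, hhx, hgx]
        · rw [key (g⁻¹ x) (by rw [Ne, Equiv.Perm.inv_eq_iff_eq]; exact c2)
            (by rw [apply_inv]; exact fun h1 => hgx ((gi x).1 h1.symm))]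
          simp
      · have h1 : g (h⁻¹ x) = h⁻¹ x := key' _ (by rw [Ne, Equiv.Perm.inv_eq_iff_eq]; exact c3)
            (by rw [apply_inv]; exact fun h1 => hhx ((hi x).1 h1.symm))
        rw [(gi _).2 h1, apply_inv]
        exact key' x c1 hhx
    · rintro (rfl | rfl | rfl)
      · rw [(gi _).2 gfix_hid, apply_inv]; exact hg
      · rw [(hi _).2 hfix_gd, inv_apply, gfix_hd]; exact hne.symm
      · rw [inv_apply, hfix_gid, apply_inv]; exact hh.symm
  rw [this, Finset.card_eq_three]
  exact ⟨d, g d, h d, hg.symm, hh.symm, hne, rfl⟩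

theorem IndexDich.fact_bound (m n : ℕ) (hn : 9 ≤ n) (hm : n ≤ 2 * m) :
    n * (n - 1) / 2 ≤ m.factorial := by
  have h1 : ∀ m, 5 ≤ m → m * (2 * m - 1) ≤ m.factorial := by
    intro m hm
    induction m, hm using Nat.le_induction with
    | base => decide
    | succ k hk ih =>
      rw [Nat.factorial_succ]
      apply Nat.mul_le_mul_left
      refine le_trans ?_ ih
      obtain ⟨j, rfl⟩ : ∃ j, k = j + 5 := ⟨k - 5, by omega⟩
      rw [show 2 * (j + 5 + 1) - 1 = 2 * j + 11 by omega,
        show 2 * (j + 5) - 1 = 2 * j + 9 by omega]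
      nlinarith
  refine le_trans ?_ (h1 m (by omega))
  apply Nat.div_le_of_le_mul
  calc n * (n - 1) ≤ (2 * m) * (2 * m - 1) := Nat.mul_le_mul hm (by omega)
    _ = _ := by ring

/-- The argument of Bochert. -/
theorem IndexDich.bochert {n : ℕ} (hn : 9 ≤ n) (G : Subgroup (Equiv.Perm (Fin n)))
    (hI : ¬ n * (n - 1) / 2 ≤ G.index) : ∃ c ∈ G, c.IsThreeCycle := by
  classical
  let P : Finset (Fin n) → Prop := fun D => ∀ g ∈ G, (∀ x, x ∉ D → g x = x) → g = 1
  have hP0 : P ∅ := by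
    intro g _ h
    ext x
    simp [h x (by simp)]
  obtain ⟨D, hD, hmax⟩ := Finset.exists_max_image ((Finset.univ : Finset (Finset (Fin n))).filter P)
    Finset.card ⟨∅, by simp [hP0]⟩
  simp only [Finset.mem_filter, Finset.mem_univ, true_and] at hD hmax
  have hcard : D.card.factorial ≤ G.index := by
    let f : Equiv.Perm D → Equiv.Perm (Fin n) ⧸ G := fun σ => (Equiv.Perm.ofSubtype σ : _)
    have hf : Function.Injective f := by
      intro σ τ h
      rw [QuotientGroup.eq, ← map_inv, ← map_mul] at h
      have := hD _ h (fun x hx => Equiv.Perm.ofSubtype_apply_of_not_mem _ hx)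
      rw [← map_one (Equiv.Perm.ofSubtype (p := (· ∈ D)))] at this
      exact (inv_mul_eq_one.1 (Equiv.Perm.ofSubtype_injective this))
    have := Nat.card_le_card_of_injective f hf
    rwa [Nat.card_perm, Nat.card_eq_fintype_card, Fintype.card_coe] at this
  have hlt : 2 * D.card < n := by
    by_contra hcon
    exact hI ((fact_bound _ n hn (by omega)).trans hcard)
  have hc : ¬ P Dᶜ := by
    intro h
    have := hmax _ h
    rw [Finset.card_compl, Fintype.card_fin] at this
    omega
  simp only [P] at hc
  push Not at hc
  obtain ⟨g, hgG, hg, hg1⟩ := hc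
  obtain ⟨d, hd⟩ : ∃ d, g d ≠ d := by
    by_contra! hcon
    exact hg1 (Equiv.ext hcon)
  have hdD : d ∉ D := by
    intro h
    exact hd (hg d (by simpa using h))
  have hc2 : ¬ P (insert d D) := by
    intro h
    have := hmax _ h
    rw [Finset.card_insert_of_notMem hdD] at this
    omega
  simp only [P] at hc2
  push Not at hc2
  obtain ⟨h, hhG, hh, hh1⟩ := hc2
  refine ⟨g * h * g⁻¹ * h⁻¹, G.mul_mem (G.mul_mem (G.mul_mem hgG hhG) (G.inv_mem hgG))
    (G.inv_mem hhG), threeCycle g h d hd ?_ ?_⟩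
  · intro hhd
    apply hh1
    apply hD h hhG
    intro x hx
    by_cases hxd : x = d
    · rw [hxd, hhd]
    · exact hh x (by simp [hxd, hx])
  · intro x hgx hhx
    by_contra hxd
    have h1 : x ∉ D := fun h => hgx (hg x (by simpa using h))
    exact hhx (hh x (by simp [hxd, h1]))

/-- Subgroups of small index in a symmetric group. -/
theorem IndexDich.small_index {α : Type*} [Fintype α] [DecidableEq α] (hα : 5 ≤ Nat.card α)
    (K : Subgroup (Equiv.Perm α)) (hK : K.index < Nat.card α) : K.index ≤ 2 := by
  have hs := alternatingGroup.isSimpleGroup hα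
  have : Nontrivial α := by
    rw [← Finite.one_lt_card_iff_nontrivial]; omega
  let φ : alternatingGroup α →* Equiv.Perm (Equiv.Perm α ⧸ K) :=
    (MulAction.toPermHom (Equiv.Perm α) (Equiv.Perm α ⧸ K)).comp (alternatingGroup α).subtype
  rcases hs.eq_bot_or_eq_top_of_normal φ.ker inferInstance with h | h
  · exfalso
    have h1 := Nat.card_le_card_of_injective φ ((MonoidHom.ker_eq_bot_iff φ).1 h)
    rw [Nat.card_perm] at h1
    have h2 : 2 * Nat.card (alternatingGroup α) = (Nat.card α).factorial := by
      rw [← alternatingGroup.index_eq_two (α := α), Subgroup.index_mul_card, Nat.card_perm]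
    have h3 : (Nat.card (Equiv.Perm α ⧸ K)).factorial ≤ (Nat.card α - 1).factorial :=
      Nat.factorial_le (by have : K.index = Nat.card (Equiv.Perm α ⧸ K) := rfl
                           omega)
    have h4 := Nat.mul_factorial_pred (n := Nat.card α) (by omega)
    have h5 := Nat.factorial_pos (Nat.card α - 1)
    nlinarith
  · have hle : alternatingGroup α ≤ K := by
      intro g hg
      have h1 : (⟨g, hg⟩ : alternatingGroup α) ∈ φ.ker := by rw [h]; trivial
      rw [MonoidHom.mem_ker] at h1
      have h2 := congrArg (fun e => e ((1 : Equiv.Perm α) : Equiv.Perm α ⧸ K)) h1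
      have h3 : ((g * 1 : Equiv.Perm α) : Equiv.Perm α ⧸ K) = ((1 : Equiv.Perm α) : _) := h2
      rw [eq_comm, QuotientGroup.eq] at h3
      simpa using h3
    have := Subgroup.index_dvd_of_le hle
    rw [alternatingGroup.index_eq_two] at this
    exact Nat.le_of_dvd (by norm_num) this

theorem IndexDich.fixed_case {n : ℕ} (hn : 9 ≤ n) (G : Subgroup (Equiv.Perm (Fin n))) (i : Fin n)
    (hi : ∀ σ ∈ G, σ i = i) :
    (G.index = n ∨ G.index = 2 * n) ∨ n * (n - 1) / 2 ≤ G.index := by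
  classical
  let f : Equiv.Perm {x : Fin n // x ≠ i} →* Equiv.Perm (Fin n) := Equiv.Perm.ofSubtype
  have hR : f.range = MulAction.stabilizer (Equiv.Perm (Fin n)) i := by
    ext g
    rw [Equiv.Perm.mem_range_ofSubtype_iff, MulAction.mem_stabilizer_iff, Equiv.Perm.smul_def]
    constructor
    · intro h
      by_contra hcon
      exact h (by simpa using hcon) rfl
    · intro h x hx
      rintro rfl
      simp at hx
      exact hx h
  have hRi : f.range.index = n := by
    rw [hR, MulAction.index_stabilizer_of_transitive, Nat.card_fin]
  have hle : G ≤ f.range := by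
    rw [hR]
    intro g hg
    exact hi g hg
  have h1 := Subgroup.relIndex_mul_index hle
  rw [← Subgroup.index_comap, hRi] at h1
  have hc : Nat.card {x : Fin n // x ≠ i} = n - 1 := by
    simp [Nat.card_eq_fintype_card]
  have h0 : (G.comap f).index ≠ 0 := Subgroup.index_ne_zero_of_finite
  by_cases hlt : (G.comap f).index < n - 1
  · left
    have := small_index (by omega) (G.comap f) (by rw [hc]; exact hlt)
    interval_cases (G.comap f).index <;> omega
  · right
    rw [← h1]
    refine (Nat.div_le_self _ _).trans ?_
    rw [mul_comm]
    exact Nat.mul_le_mul_right _ (by omega)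

theorem IndexDich.intransitive_case {n : ℕ} (G : Subgroup (Equiv.Perm (Fin n)))
    (hfix : ¬ ∃ i : Fin n, ∀ σ ∈ G, σ i = i)
    (ht : ¬ MulAction.IsPretransitive G (Fin n)) : n * (n - 1) / 2 ≤ G.index := by
  classical
  have hxy : ∃ x y : Fin n, y ∉ MulAction.orbit G x := by
    by_contra! hcon
    exact ht ⟨fun x y => hcon x y⟩
  obtain ⟨x, y, hxy⟩ := hxy
  let O : Finset (Fin n) := Finset.univ.filter (· ∈ MulAction.orbit G x)
  have hO : ∀ z, z ∈ O ↔ z ∈ MulAction.orbit G x := fun z => by simp [O]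
  have hinv : ∀ g ∈ G, ∀ z, z ∈ O → g z ∈ O := by
    intro g hg z hz
    rw [hO] at hz ⊢
    exact MulAction.mem_orbit_of_mem_orbit (⟨g, hg⟩ : G) hz
  have hinv' : ∀ g ∈ G, g • O = O := by
    intro g hg
    apply Finset.eq_of_subset_of_card_le
    · intro w hw
      obtain ⟨z, hz, rfl⟩ := Finset.mem_smul_finset.1 hw
      exact hinv g hg z hz
    · rw [Finset.card_smul_finset]
  have hx : x ∈ O := (hO x).2 (MulAction.mem_orbit_self x)
  have hy : y ∉ O := fun h => hxy ((hO y).1 h)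
  have h1 : O.card ≠ 1 := by
    intro h
    obtain ⟨a, ha⟩ := Finset.card_eq_one.1 h
    refine hfix ⟨a, fun σ hσ => ?_⟩
    have := hinv σ hσ a (by simp [ha])
    simpa [ha] using this
  have h2 : Oᶜ.card ≠ 1 := by
    intro h
    obtain ⟨a, ha⟩ := Finset.card_eq_one.1 h
    refine hfix ⟨a, fun σ hσ => ?_⟩
    have haO : a ∉ O := by
      rw [← Finset.mem_compl, ha]; simp
    have : σ a ∈ Oᶜ := by
      rw [Finset.mem_compl]
      intro hc
      apply haO
      have := hinv σ⁻¹ (G.inv_mem hσ) _ hc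
      rwa [inv_apply] at this
    simpa [ha] using this
  have p1 : 0 < O.card := Finset.card_pos.2 ⟨x, hx⟩
  have p2 : 0 < Oᶜ.card := Finset.card_pos.2 ⟨y, by simpa using hy⟩
  have h3 := Finset.card_add_card_compl O
  rw [Fintype.card_fin] at h3
  refine (choose_two_le n O.card (by omega) (by omega)).trans ?_
  have := single_bound (a := O.card) G {O} (by
    intro g hg t ht
    rw [Finset.mem_singleton] at ht ⊢
    rw [ht, hinv' g hg]) O (by simp) rfl
  simpa using this

theorem IndexDich.imprimitive_case {n : ℕ} (hn : 9 ≤ n) (G : Subgroup (Equiv.Perm (Fin n)))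
    (ht : MulAction.IsPretransitive G (Fin n)) (hp : ¬ MulAction.IsPreprimitive G (Fin n)) :
    n * (n - 1) / 2 ≤ G.index := by
  classical
  have hB : ∃ B : Set (Fin n), MulAction.IsBlock G B ∧ ¬ MulAction.IsTrivialBlock B := by
    by_contra! hcon
    exact hp ⟨fun {B} hB => hcon B hB⟩
  obtain ⟨B, hB, hBt⟩ := hB
  have hnt : B.Nontrivial := by
    rw [← Set.not_subsingleton_iff]; exact fun h => hBt (Or.inl h)
  have hcard := hB.ncard_block_mul_ncard_orbit_eq hnt.nonempty
  rw [Nat.card_fin] at hcard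
  have ha : 2 ≤ B.ncard := Set.one_lt_ncard_iff_nontrivial.2 hnt
  have hb : 2 ≤ (MulAction.orbit G B).ncard := by
    by_contra hcon
    apply hBt
    right
    apply hB.eq_univ_of_card_lt
    rw [Nat.card_fin]
    nlinarith
  let T : Finset (Finset (Fin n)) :=
    Finset.univ.filter (fun s => (s : Set (Fin n)) ∈ MulAction.orbit G B)
  have hTm : ∀ s : Finset (Fin n), s ∈ T ↔ (s : Set (Fin n)) ∈ MulAction.orbit G B := fun s => by
    simp [T]
  have hTc : T.card ≤ (MulAction.orbit G B).ncard := by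
    rw [← Set.ncard_coe_finset]
    refine Set.ncard_le_ncard_of_injOn (fun s : Finset (Fin n) => (s : Set (Fin n))) ?_ ?_
      (Set.toFinite _)
    · intro s hs
      exact (hTm s).1 hs
    · intro s _ t _ hst
      exact Finset.coe_injective hst
  have hT : ∀ g ∈ G, ∀ t ∈ T, g • t ∈ T := by
    intro g hg t ht
    rw [hTm] at ht ⊢
    rw [Finset.coe_smul_finset]
    exact MulAction.mem_orbit_of_mem_orbit (⟨g, hg⟩ : G) ht
  have hB0 : B.toFinset ∈ T := by
    rw [hTm, Set.coe_toFinset]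
    exact MulAction.mem_orbit_self B
  have hB0c : B.toFinset.card = B.ncard := (Set.ncard_eq_toFinset_card' B).symm
  have hs := single_bound G T hT B.toFinset hB0 hB0c
  have hs' := hs.trans (Nat.mul_le_mul_left _ hTc)
  by_cases h4 : 4 ≤ B.ncard
  · exact arith4 n _ _ _ hn hcard h4 hb hs'
  obtain ⟨C, hC, hCB⟩ : ∃ C ∈ MulAction.orbit G B, C ≠ B := by
    have := Set.one_lt_ncard_iff_nontrivial.1 hb
    exact this.exists_ne B
  obtain ⟨g, hg⟩ := hC
  have hgB : g • B = C := hg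
  have hC0 : C.toFinset ∈ T := by
    rw [hTm, Set.coe_toFinset]
    exact ⟨g, hg⟩
  have hC0c : C.toFinset.card = B.ncard := by
    rw [← Set.ncard_eq_toFinset_card', ← hgB, Set.ncard_smul_set]
  have hdisj : Disjoint B.toFinset C.toFinset := by
    rw [Set.disjoint_toFinset, ← hgB]
    have := hB (g₁ := 1) (g₂ := g) (by rw [one_smul, hgB]; exact hCB.symm)
    rwa [one_smul] at this
  have hpb := pair_bound G T hT _ _ hB0 hC0 hB0c hC0c hdisj
  have hpb' := hpb.trans (Nat.mul_le_mul_left _ (Nat.mul_le_mul hTc hTc))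
  generalize (MulAction.orbit G B).ncard = b at *
  generalize B.ncard = a at *
  interval_cases a
  · subst hcard
    exact arith2 b _ (by omega) hpb'
  · subst hcard
    exact arith3 b _ (by omega) hpb'

/-- For `n ≥ 9`, every subgroup `G` of `Sₙ` other than `Sₙ` and `Aₙ` either has index `n` or
`2n` in `Sₙ` and fixes some element of `{1, …, n}`, or has index at least `n(n-1)/2` in `Sₙ`. -/
theorem index_dichotomy_subgroup (n : ℕ) (hn : 9 ≤ n)
    (G : Subgroup (Equiv.Perm (Fin n)))
    (hG1 : G ≠ ⊤) (hG2 : G ≠ alternatingGroup (Fin n)) :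
    ((G.index = n ∨ G.index = 2 * n) ∧ ∃ i : Fin n, ∀ σ ∈ G, σ i = i) ∨
      n * (n - 1) / 2 ≤ G.index := by
  classical
  by_cases hfix : ∃ i : Fin n, ∀ σ ∈ G, σ i = i
  · obtain ⟨i, hi⟩ := hfix
    rcases IndexDich.fixed_case hn G i hi with h | h
    · exact Or.inl ⟨h, i, hi⟩
    · exact Or.inr h
  right
  by_cases ht : MulAction.IsPretransitive G (Fin n)
  · by_cases hp : MulAction.IsPreprimitive G (Fin n)
    · by_contra hI
      obtain ⟨c, hc, h3⟩ := IndexDich.bochert hn G hI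
      have hle := Equiv.Perm.alternatingGroup_le_of_isPreprimitive_of_isThreeCycle_mem hp h3 hc
      have hnt : Nontrivial (Fin n) := Fin.nontrivial_iff_two_le.2 (by omega)
      have hdvd := Subgroup.index_dvd_of_le hle
      rw [alternatingGroup.index_eq_two] at hdvd
      rcases (Nat.dvd_prime Nat.prime_two).1 hdvd with h | h
      · exact hG1 (Subgroup.index_eq_one.1 h)
      · exact hG2 (Equiv.Perm.eq_alternatingGroup_of_index_eq_two h)
    · exact IndexDich.imprimitive_case hn G ht hp
  · exact IndexDich.intransitive_case G hfix ht
end
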